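/- arXiv:2206.04346 — 2 statements merged into one kernel-verified Lean document; each statement's English description precedes it below -/
import Mathlib

section
/- Let c_1, ..., c_{n-1} be points (not necessarily distinct) in the open unit disk 𝔻. Then there exists a finite Blaschke product B of degree n whose derivative B' vanishes in 𝔻 exactly at the points c_1, ..., c_{n-1}, counted with multiplicity (and B' has no other zeros in 𝔻). -/
open Metric Filter

/-- The order of vanishing of `f` at `z`: the least `n` such that the `n`-th
derivative of `f` at `z` is nonzero (`⊤` if all derivatives vanish). -/
noncomputable def vOrder (f : ℂ → ℂ) (z : ℂ) : ℕ∞ :=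
  sInf ((fun n : ℕ => (n : ℕ∞)) '' {n : ℕ | iteratedDeriv n f z ≠ 0})


section Heins
open Polynomial Topology

/-! ### Calculus lemmas -/

lemma second_deriv_nonneg {f f' : ℝ → ℝ} {f'' : ℝ} (h1 : ∀ s, HasDerivAt f (f' s) s)
    (h2 : HasDerivAt f' f'' 0) (hm : IsLocalMin f 0) : 0 ≤ f'' := by
  by_contra hneg
  push Not at hneg
  have hd : deriv f = f' := funext fun s => (h1 s).deriv
  have hf'0 : f' 0 = 0 := hm.hasDerivAt_eq_zero (h1 0)
  have hM : IsLocalMax f 0 := by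
    apply isLocalMax_of_deriv_deriv_neg
    · rw [hd, h2.deriv]; exact hneg
    · rw [hd, hf'0]
    · exact (h1 0).continuousAt
  have hc : f =ᶠ[𝓝 0] fun _ => f 0 := by
    filter_upwards [hm, hM] with x h3 h4
    exact le_antisymm h4 h3
  have hc2 : deriv f =ᶠ[𝓝 0] deriv (fun _ => f 0) := hc.deriv
  have hc3 : deriv (deriv f) 0 = deriv (deriv (fun _ : ℝ => f 0)) 0 := hc2.deriv_eq
  rw [hd, h2.deriv] at hc3
  simp at hc3
  linarith

/-- derivative of `conj f * g` along a real line -/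
lemma slice_hasDerivAt (f g : ℂ[X]) (p u : ℂ) (s : ℝ) :
    HasDerivAt (fun s : ℝ => (starRingEnd ℂ) (f.eval (p + s * u)) * g.eval (p + s * u))
      ((starRingEnd ℂ) (u * f.derivative.eval (p + s * u)) * g.eval (p + s * u)
        + (starRingEnd ℂ) (f.eval (p + s * u)) * (u * g.derivative.eval (p + s * u))) s := by
  have hl : HasDerivAt (fun s : ℝ => p + (s : ℂ) * u) u s := by
    have := (((hasDerivAt_id s).ofReal_comp).mul_const u).const_add p
    simpa using this
  have hf : HasDerivAt (fun s : ℝ => f.eval (p + s * u)) (u * f.derivative.eval (p + s * u)) s := by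
    have := (f.hasDerivAt (p + s * u)).comp s hl
    rw [mul_comm]; exact this
  have hg : HasDerivAt (fun s : ℝ => g.eval (p + s * u)) (u * g.derivative.eval (p + s * u)) s := by
    have := (g.hasDerivAt (p + s * u)).comp s hl
    rw [mul_comm]; exact this
  exact (hf.star).mul hg

lemma hasDerivAt_re {f : ℝ → ℂ} {f' : ℂ} {s : ℝ} (h : HasDerivAt f f' s) :
    HasDerivAt (fun s => (f s).re) f'.re s :=
  Complex.reCLM.hasFDerivAt.comp_hasDerivAt s h

lemma min_tests {ι : Type*} (I : Finset ι) (f g : ι → ℂ[X]) (p : ℂ)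
    (hm : IsLocalMin (fun z => ∑ i ∈ I, ((starRingEnd ℂ) ((f i).eval z) * (g i).eval z).re) p) :
    (∑ i ∈ I, ((f i).derivative.eval p * (starRingEnd ℂ) ((g i).eval p)
        + (starRingEnd ℂ) ((f i).eval p) * (g i).derivative.eval p) = 0) ∧
    0 ≤ ∑ i ∈ I, ((starRingEnd ℂ) ((f i).derivative.eval p) * (g i).derivative.eval p).re := by
  set H : ℂ → ℝ := fun z => ∑ i ∈ I, ((starRingEnd ℂ) ((f i).eval z) * (g i).eval z).re with hH
  have h1 : ∀ u : ℂ, ∀ s : ℝ, HasDerivAt (fun s : ℝ => H (p + s * u))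
      (∑ i ∈ I, ((starRingEnd ℂ) (u * (f i).derivative.eval (p + s * u)) * (g i).eval (p + s * u)
        + (starRingEnd ℂ) ((f i).eval (p + s * u)) * (u * (g i).derivative.eval (p + s * u))).re) s := by
    intro u s
    exact HasDerivAt.fun_sum fun i _ => hasDerivAt_re (slice_hasDerivAt (f i) (g i) p u s)
  have h2 : ∀ u : ℂ, HasDerivAt (fun s : ℝ => ∑ i ∈ I, ((starRingEnd ℂ) (u * (f i).derivative.eval (p + s * u)) * (g i).eval (p + s * u)
        + (starRingEnd ℂ) ((f i).eval (p + s * u)) * (u * (g i).derivative.eval (p + s * u))).re)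
      (∑ i ∈ I, ((starRingEnd ℂ) (u * (u * (f i).derivative.derivative.eval p)) * (g i).eval p
        + 2 * ((starRingEnd ℂ) (u * (f i).derivative.eval p) * (u * (g i).derivative.eval p))
        + (starRingEnd ℂ) ((f i).eval p) * (u * (u * (g i).derivative.derivative.eval p))).re) 0 := by
    intro u
    refine HasDerivAt.fun_sum fun i _ => hasDerivAt_re ?_
    have e1 := slice_hasDerivAt (C u * (f i).derivative) (g i) p u 0
    have e2 := slice_hasDerivAt (f i) (C u * (g i).derivative) p u 0
    have e3 := e1.add e2
    refine (e3.congr_deriv ?_).congr_of_eventuallyEq (Eventually.of_forall fun s => ?_)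
    · simp; ring
    · simp
  have hline : ∀ u : ℂ, IsLocalMin (fun s : ℝ => H (p + s * u)) 0 := by
    intro u
    have hc : ContinuousAt (fun s : ℝ => p + (s : ℂ) * u) 0 := by fun_prop
    have hm' : IsLocalMin H (p + ((0 : ℝ) : ℂ) * u) := by simpa using hm
    exact IsLocalMin.comp_continuous (g := fun s : ℝ => p + (s : ℂ) * u) hm' hc
  constructor
  · set Z := ∑ i ∈ I, ((f i).derivative.eval p * (starRingEnd ℂ) ((g i).eval p)
        + (starRingEnd ℂ) ((f i).eval p) * (g i).derivative.eval p) with hZ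
    have key : ∀ u : ℂ, (u * Z).re = 0 := by
      intro u
      have h := (hline u).hasDerivAt_eq_zero (h1 u 0)
      rw [← h, hZ, Finset.mul_sum, Complex.re_sum]
      refine Finset.sum_congr rfl fun i _ => ?_
      simp
      ring
    have k1 := key 1
    have k2 := key Complex.I
    apply Complex.ext
    · simpa using k1
    · simpa using k2
  · have a1 := second_deriv_nonneg (h1 1) (h2 1) (hline 1)
    have a2 := second_deriv_nonneg (h1 Complex.I) (h2 Complex.I) (hline Complex.I)
    have := add_nonneg a1 a2
    rw [← Finset.sum_add_distrib] at this
    have e : (0 : ℝ) ≤ ∑ i ∈ I, 4 * ((starRingEnd ℂ) ((f i).derivative.eval p) * (g i).derivative.eval p).re := by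
      refine this.trans_eq (Finset.sum_congr rfl fun i _ => ?_)
      rw [← Complex.add_re]
      simp
      ring
    rw [← Finset.mul_sum] at e
    linarith

lemma dbar_zero {ι : Type*} (I : Finset ι) (f g : ι → ℂ[X])
    (h : ∀ z ∈ ball (0 : ℂ) 1, ∑ i ∈ I, (starRingEnd ℂ) ((f i).eval z) * (g i).eval z = 0) :
    ∀ z ∈ ball (0 : ℂ) 1, ∑ i ∈ I, (starRingEnd ℂ) ((f i).eval z) * (g i).derivative.eval z = 0 := by
  intro p hp
  have key : ∀ u : ℂ, (starRingEnd ℂ) u * (∑ i ∈ I, (starRingEnd ℂ) ((f i).derivative.eval p) * (g i).eval p)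
      + u * ∑ i ∈ I, (starRingEnd ℂ) ((f i).eval p) * (g i).derivative.eval p = 0 := by
    intro u
    have h1 : HasDerivAt (fun s : ℝ => ∑ i ∈ I, (starRingEnd ℂ) ((f i).eval (p + s * u)) * (g i).eval (p + s * u)) _ 0 :=
      HasDerivAt.fun_sum fun i _ => slice_hasDerivAt (f i) (g i) p u 0
    have hc : ContinuousAt (fun s : ℝ => p + (s : ℂ) * u) 0 := by fun_prop
    have hev : (fun s : ℝ => ∑ i ∈ I, (starRingEnd ℂ) ((f i).eval (p + s * u)) * (g i).eval (p + s * u)) =ᶠ[𝓝 0] fun _ => 0 := by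
      have : ball (0 : ℂ) 1 ∈ 𝓝 (p + ((0:ℝ) : ℂ) * u) := by
        simpa using isOpen_ball.mem_nhds hp
      filter_upwards [hc this] with s hs
      exact h _ hs
    have h3 := hev.deriv_eq
    rw [h1.deriv] at h3
    simp only [deriv_const] at h3
    rw [← h3, Finset.mul_sum, Finset.mul_sum, ← Finset.sum_add_distrib]
    refine Finset.sum_congr rfl fun i _ => ?_
    simp
    ring
  have k1 := key 1
  have k2 := key Complex.I
  simp at k1 k2
  have : (2 * Complex.I) * ∑ i ∈ I, (starRingEnd ℂ) ((f i).eval p) * (g i).derivative.eval p = 0 := by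
    linear_combination Complex.I * k1 + k2
  simpa using this

lemma dbar_zero_iter {ι : Type*} (I : Finset ι) (f g : ι → ℂ[X])
    (h : ∀ z ∈ ball (0 : ℂ) 1, ∑ i ∈ I, (starRingEnd ℂ) ((f i).eval z) * (g i).eval z = 0) (k : ℕ) :
    ∀ z ∈ ball (0 : ℂ) 1, ∑ i ∈ I, (starRingEnd ℂ) ((f i).eval z) * (derivative^[k] (g i)).eval z = 0 := by
  induction k with
  | zero => simpa using h
  | succ k ih =>
    simp only [Function.iterate_succ_apply']
    exact dbar_zero I f (fun i => derivative^[k] (g i)) ih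

/-- the algebraic heart of the maximum principle -/
lemma key_algebra (a p c e a1 p1 c1 e1 A P C E A1 P1 C1 E1 z Z t ε D : ℂ)
    (hD : D = a * A - p * P)
    (hH : t * D + (A * c + a * C - P * e - p * E) = 0)
    (hZ : t * (a1 * A - p1 * P) + a1 * C + A * c1 - p1 * E - P * e1 - ε * Z * D = 0)
    (hZc : t * (A1 * a - P1 * p) + A1 * c + a * C1 - P1 * e - p * E1 - ε * z * D = 0)
    (hW : e1 * a + p1 * c - e * a1 - p * c1 = 0)
    (hWc : E1 * A + P1 * C - E * A1 - P * C1 = 0) :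
    D * (t * (a1 * A1 - p1 * P1) + (c1 * A1 + C1 * a1 - e1 * P1 - E1 * p1) - ε * D
      - ε * (z * (a1 * A - p1 * P) + Z * (A1 * a - P1 * p)))
    = - ε * D ^ 2 - 2 * t * ((p1 * a - p * a1) * (P1 * A - P * A1)) := by
  subst hD
  linear_combination (a * A1 - p * P1) * hZ + (a1 * A - p1 * P) * hZc
    - (P1 * A - P * A1) * hW - (p1 * a - p * a1) * hWc - (a1 * A1 - p1 * P1) * hH


/-! ### The parametrisation -/

/-- Denominator polynomial (degree at most `n`, real constant term). -/
noncomputable def Gp {n : ℕ} (e : (Fin n → ℂ) × ℝ) : ℂ[X] :=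
  C (e.2 : ℂ) + ∑ i : Fin n, C (e.1 i) * X ^ ((i : ℕ) + 1)

/-- The `n`-reversal of the denominator. -/
noncomputable def Ap {n : ℕ} (e : (Fin n → ℂ) × ℝ) : ℂ[X] :=
  C (e.2 : ℂ) * X ^ n + ∑ i : Fin n, C ((starRingEnd ℂ) (e.1 i)) * X ^ (n - 1 - (i : ℕ))

/-- The numerator polynomial. -/
noncomputable def Pp {n : ℕ} (e : (Fin n → ℂ) × ℝ) : ℂ[X] := X * Ap e

/-- polarised Wronskian -/
noncomputable def Wd {n : ℕ} (e q : (Fin n → ℂ) × ℝ) : ℂ[X] :=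
  derivative (Pp q) * Gp e + derivative (Pp e) * Gp q - Pp q * derivative (Gp e)
    - Pp e * derivative (Gp q)

/-- Wronskian -/
noncomputable def Wp {n : ℕ} (e : (Fin n → ℂ) × ℝ) : ℂ[X] :=
  derivative (Pp e) * Gp e - Pp e * derivative (Gp e)

/-- The trigonometric polynomial on the circle -/
noncomputable def Tq {n : ℕ} (e : (Fin n → ℂ) × ℝ) (z : ℂ) : ℝ :=
  (n + 1) * ((starRingEnd ℂ) ((Gp e).eval z) * (Gp e).eval z).re
    - 2 * ((starRingEnd ℂ) ((Gp e).eval z) * (z * (Gp e).derivative.eval z)).re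

noncomputable def Td {n : ℕ} (e q : (Fin n → ℂ) × ℝ) (z : ℂ) : ℝ :=
  2 * (n + 1) * ((starRingEnd ℂ) ((Gp e).eval z) * (Gp q).eval z).re
    - 2 * ((starRingEnd ℂ) ((Gp e).eval z) * (z * (Gp q).derivative.eval z)
      + (starRingEnd ℂ) ((Gp q).eval z) * (z * (Gp e).derivative.eval z)).re

noncomputable def Dd {n : ℕ} (e q : (Fin n → ℂ) × ℝ) (z : ℂ) : ℝ :=
  2 * ((starRingEnd ℂ) ((Gp e).eval z) * (Gp q).eval z
    - (starRingEnd ℂ) ((Pp e).eval z) * (Pp q).eval z).re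

section
variable {n : ℕ}

lemma Gp_eval (e : (Fin n → ℂ) × ℝ) (z : ℂ) :
    (Gp e).eval z = e.2 + ∑ i : Fin n, e.1 i * z ^ ((i : ℕ) + 1) := by
  simp [Gp, eval_finsetSum]

lemma Gp_deriv_eval (e : (Fin n → ℂ) × ℝ) (z : ℂ) :
    (Gp e).derivative.eval z = ∑ i : Fin n, e.1 i * (((i : ℕ) + 1) * z ^ (i : ℕ)) := by
  simp [Gp, eval_finsetSum]

lemma Ap_eval (e : (Fin n → ℂ) × ℝ) (z : ℂ) :
    (Ap e).eval z = e.2 * z ^ n + ∑ i : Fin n, (starRingEnd ℂ) (e.1 i) * z ^ (n - 1 - (i : ℕ)) := by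
  simp [Ap, eval_finsetSum]

lemma Pp_eval (e : (Fin n → ℂ) × ℝ) (z : ℂ) :
    (Pp e).eval z = z * (Ap e).eval z := by
  simp [Pp]

lemma Gp_add (e q : (Fin n → ℂ) × ℝ) : Gp (e + q) = Gp e + Gp q := by
  simp [Gp, add_mul, Finset.sum_add_distrib]; ring

lemma Gp_smul (s : ℝ) (q : (Fin n → ℂ) × ℝ) : Gp (s • q) = C (s : ℂ) * Gp q := by
  simp [Gp, mul_add, Finset.mul_sum, mul_assoc]

lemma Gp_neg (q : (Fin n → ℂ) × ℝ) : Gp (-q) = - Gp q := by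
  simp [Gp]; ring

lemma Pp_neg (q : (Fin n → ℂ) × ℝ) : Pp (-q) = - Pp q := by
  simp [Pp, Ap]; ring

lemma Gp_eval_zero (e : (Fin n → ℂ) × ℝ) : (Gp e).eval 0 = e.2 := by
  simp [Gp_eval]

lemma Pp_eval_zero (e : (Fin n → ℂ) × ℝ) : (Pp e).eval 0 = 0 := by
  simp [Pp_eval]

lemma Ap_refl (e : (Fin n → ℂ) × ℝ) {z : ℂ} (hz : z ≠ 0) :
    (Ap e).eval z = z ^ n * (starRingEnd ℂ) ((Gp e).eval ((starRingEnd ℂ) z)⁻¹) := by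
  rw [Ap_eval, Gp_eval, map_add, mul_add, map_sum, Finset.mul_sum]
  congr 1
  · simp; ring
  · refine Finset.sum_congr rfl fun i _ => ?_
    have : n = (n - 1 - (i : ℕ)) + ((i : ℕ) + 1) := by omega
    simp only [map_mul, map_pow, map_inv₀, Complex.conj_conj]
    have h2 : z ^ n = z ^ (n - 1 - (i : ℕ)) * z ^ ((i : ℕ) + 1) := by rw [← pow_add, ← this]
    have h3 : z ^ ((i : ℕ) + 1) * z⁻¹ ^ ((i : ℕ) + 1) = 1 := by
      rw [← mul_pow, mul_inv_cancel₀ hz, one_pow]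
    rw [h2]
    linear_combination (- (starRingEnd ℂ) (e.1 i) * z ^ (n - 1 - (i : ℕ))) * h3

lemma conj_inv_circle {z : ℂ} (hz : ‖z‖ = 1) : ((starRingEnd ℂ) z)⁻¹ = z := by
  rw [Complex.inv_def]
  simp [Complex.normSq_eq_norm_sq, hz]

lemma ne_zero_circle {z : ℂ} (hz : ‖z‖ = 1) : z ≠ 0 := by
  rintro rfl; simp at hz

lemma Pp_circle (e : (Fin n → ℂ) × ℝ) {z : ℂ} (hz : ‖z‖ = 1) :
    (Pp e).eval z = z ^ (n + 1) * (starRingEnd ℂ) ((Gp e).eval z) := by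
  rw [Pp_eval, Ap_refl e (ne_zero_circle hz), conj_inv_circle hz]; ring

lemma Pp_deriv_circle (e : (Fin n → ℂ) × ℝ) {z : ℂ} (hz : ‖z‖ = 1) :
    z * (Pp e).derivative.eval z = z ^ (n + 1) * ((n + 1) * (starRingEnd ℂ) ((Gp e).eval z)
      - (starRingEnd ℂ) (z * (Gp e).derivative.eval z)) := by
  have h0 := ne_zero_circle hz
  have hc : (starRingEnd ℂ) z = z⁻¹ := by
    rw [← conj_inv_circle hz, inv_inv, conj_inv_circle hz]
  have hP : Pp e = C (e.2 : ℂ) * X ^ (n + 1)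
      + ∑ i : Fin n, C ((starRingEnd ℂ) (e.1 i)) * X ^ (n - (i : ℕ)) := by
    rw [Pp, Ap, mul_add, Finset.mul_sum]
    congr 1
    · ring
    · refine Finset.sum_congr rfl fun i _ => ?_
      have : n - (i : ℕ) = (n - 1 - (i : ℕ)) + 1 := by omega
      rw [this, pow_succ]; ring
  have hPd : (Pp e).derivative.eval z = e.2 * ((n + 1) * z ^ n)
      + ∑ i : Fin n, (starRingEnd ℂ) (e.1 i) * ((n - (i : ℕ) : ℂ) * z ^ (n - 1 - (i : ℕ))) := by
    rw [hP]
    simp only [derivative_add, derivative_sum, derivative_C_mul, derivative_X_pow, eval_add,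
      eval_finsetSum, eval_mul, eval_C, eval_pow, eval_X]
    congr 1
    · simp
    · refine Finset.sum_congr rfl fun i _ => ?_
      rw [Nat.cast_sub i.2.le]
      have : n - (i : ℕ) - 1 = n - 1 - (i : ℕ) := by omega
      rw [this]
  rw [hPd, Gp_eval, Gp_deriv_eval, map_add, mul_add, mul_add, add_sub_assoc, mul_add]
  congr 1
  · simp; ring
  · simp only [map_sum, Finset.mul_sum, ← Finset.sum_sub_distrib]
    refine Finset.sum_congr rfl fun i _ => ?_
    simp only [map_mul, map_pow, hc, map_add, map_natCast, map_one]
    have : n + 1 = (n - 1 - (i : ℕ)) + ((i : ℕ) + 2) := by omega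
    have h3 : z ^ ((i : ℕ) + 1) * z⁻¹ ^ ((i : ℕ) + 1) = 1 := by
      rw [← mul_pow, mul_inv_cancel₀ h0, one_pow]
    rw [this, pow_add]
    linear_combination (- (n - (i : ℕ) : ℂ) * z * (starRingEnd ℂ) (e.1 i) * z ^ (n - 1 - (i : ℕ))) * h3

lemma Wd_circle (e q : (Fin n → ℂ) × ℝ) {z : ℂ} (hz : ‖z‖ = 1) :
    (Wd e q).eval z = z ^ n * (Td e q z : ℂ) := by
  have h0 := ne_zero_circle hz
  apply mul_left_cancel₀ h0
  have h1 := Pp_deriv_circle e hz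
  have h2 := Pp_deriv_circle q hz
  have h3 := Pp_circle e hz
  have h4 := Pp_circle q hz
  have hre : ∀ w : ℂ, ((w.re : ℝ) : ℂ) = (w + (starRingEnd ℂ) w) / 2 := fun w => by
    rw [Complex.add_conj]; push_cast; ring
  simp only [Wd, eval_add, eval_sub, eval_mul, Td]
  push_cast
  simp only [hre, map_add, map_mul, Complex.conj_conj]
  simp only [map_mul] at h1 h2
  rw [h3, h4]
  linear_combination (eval z (Gp e)) * h2 + (eval z (Gp q)) * h1

lemma Wd_self (e : (Fin n → ℂ) × ℝ) : Wd e e = 2 * Wp e := by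
  simp only [Wd, Wp]; ring

lemma Td_self (e : (Fin n → ℂ) × ℝ) (z : ℂ) : Td e e z = 2 * Tq e z := by
  simp only [Td, Tq, Complex.add_re]; ring

lemma Wp_circle (e : (Fin n → ℂ) × ℝ) {z : ℂ} (hz : ‖z‖ = 1) :
    (Wp e).eval z = z ^ n * (Tq e z : ℂ) := by
  have := Wd_circle e e hz
  rw [Wd_self, Td_self] at this
  simp at this
  have h2 : (2 : ℂ) ≠ 0 := two_ne_zero
  apply mul_left_cancel₀ h2
  rw [this]; ring

lemma Tq_add_smul (e q : (Fin n → ℂ) × ℝ) (s : ℝ) (z : ℂ) :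
    Tq (e + s • q) z = Tq e z + s * Td e q z + s ^ 2 * Tq q z := by
  simp only [Tq, Td, Gp_add, Gp_smul, derivative_add, derivative_C_mul, eval_add, eval_mul, eval_C,
    map_add, map_mul, Complex.conj_ofReal, Complex.add_re, Complex.mul_re, Complex.add_im,
    Complex.mul_im, Complex.ofReal_re, Complex.ofReal_im, Complex.conj_re, Complex.conj_im]
  ring

lemma Gp_natDegree (e : (Fin n → ℂ) × ℝ) : (Gp e).natDegree ≤ n := by
  refine natDegree_add_le_of_degree_le (by simp) ?_
  refine natDegree_sum_le_of_forall_le _ _ fun i _ => ?_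
  exact (natDegree_C_mul_X_pow_le _ _).trans i.2

lemma Pp_natDegree (e : (Fin n → ℂ) × ℝ) : (Pp e).natDegree ≤ n + 1 := by
  have : (Ap e).natDegree ≤ n := by
    refine natDegree_add_le_of_degree_le (natDegree_C_mul_X_pow_le _ _) ?_
    refine natDegree_sum_le_of_forall_le _ _ fun i _ => ?_
    exact (natDegree_C_mul_X_pow_le _ _).trans (by omega)
  refine (natDegree_mul_le).trans ?_
  simp; omega

lemma Wd_degree (e q : (Fin n → ℂ) × ℝ) : (Wd e q).degree < (2 * n + 1 : ℕ) := by
  have hn : (Wd e q).natDegree ≤ 2 * n := by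
    have d1 : ∀ e q : (Fin n → ℂ) × ℝ, (derivative (Pp q) * Gp e).natDegree ≤ 2 * n := fun e q => by
      have h1 := natDegree_derivative_le (Pp q)
      have h2 := Pp_natDegree q
      have h3 := Gp_natDegree e
      have h4 := natDegree_mul_le (p := derivative (Pp q)) (q := Gp e)
      omega
    have d2 : ∀ e q : (Fin n → ℂ) × ℝ, (Pp q * derivative (Gp e)).natDegree ≤ 2 * n := fun e q => by
      rcases Nat.eq_zero_or_pos n with hn | hn
      · have : (Gp e).natDegree = 0 := by have := Gp_natDegree e; omega
        rw [derivative_of_natDegree_zero this]; simp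
      have h1 := natDegree_derivative_le (Gp e)
      have h2 := Pp_natDegree q
      have h3 := Gp_natDegree e
      have h4 := natDegree_mul_le (p := Pp q) (q := derivative (Gp e))
      omega
    unfold Wd
    refine (natDegree_sub_le_of_le (natDegree_sub_le_of_le
      (natDegree_add_le_of_degree_le (d1 _ _) (d1 _ _)) (d2 _ _)) (d2 _ _)).trans (by simp)
  refine (degree_le_natDegree).trans_lt ?_
  exact_mod_cast Nat.lt_succ_of_le hn

lemma Gp_cont : Continuous (fun x : ((Fin n → ℂ) × ℝ) × ℂ => (Gp x.1).eval x.2) := by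
  simp only [Gp_eval]; fun_prop

lemma Gp_deriv_cont : Continuous (fun x : ((Fin n → ℂ) × ℝ) × ℂ => (Gp x.1).derivative.eval x.2) := by
  simp only [Gp_deriv_eval]; fun_prop

lemma Tq_cont : Continuous (fun x : ((Fin n → ℂ) × ℝ) × ℂ => Tq x.1 x.2) := by
  have h1 := Gp_cont (n := n)
  have h2 := Gp_deriv_cont (n := n)
  unfold Tq
  fun_prop

lemma Gp_inj (q : (Fin n → ℂ) × ℝ) (h : Gp q = 0) : q = 0 := by
  have h0 : q.2 = 0 := by
    have := Gp_eval_zero q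
    rw [h] at this
    simpa using this.symm
  have h1 : ∀ j : Fin n, q.1 j = 0 := by
    intro j
    have : (Gp q).coeff ((j : ℕ) + 1) = q.1 j := by
      simp only [Gp, coeff_add, finsetSum_coeff, coeff_C_mul, coeff_X_pow, coeff_C]
      rw [Finset.sum_eq_single j]
      · simp
      · intro i _ hij
        have : (j : ℕ) ≠ i := fun hh => hij (Fin.ext hh.symm)
        simp [this]
      · simp
    rw [← this, h]; simp
  exact Prod.ext (funext h1) h0

end


/-! ### Zero-free denominators -/

/-- The denominator has no zero in the closed disk. -/
def Good {n : ℕ} (e : (Fin n → ℂ) × ℝ) : Prop := ∀ z : ℂ, ‖z‖ ≤ 1 → (Gp e).eval z ≠ 0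

lemma multiset_enum (m : Multiset ℂ) (n : ℕ) (h : m.card = n) :
    ∃ a : Fin n → ℂ, (∀ j, a j ∈ m) ∧ ∀ f : ℂ → ℂ, (m.map f).prod = ∏ j, f (a j) := by
  have hl : m.toList.length = n := by simpa using h
  subst hl
  refine ⟨m.toList.get, fun j => ?_, fun f => ?_⟩
  · rw [← Multiset.mem_toList]; exact List.get_mem _ _
  · conv_lhs => rw [← Multiset.coe_toList m]
    rw [Multiset.map_coe, Multiset.prod_coe]
    have := List.prod_ofFn (f := fun j => f (m.toList.get j))
    rw [← this]
    congr 1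
    apply List.ext_get
    · simp
    · simp

section
variable {n : ℕ}

lemma Good.ne {e : (Fin n → ℂ) × ℝ} (h : Good e) : (e.2 : ℂ) ≠ 0 := by
  have := h 0 (by simp)
  rwa [Gp_eval_zero] at this

lemma good_factor {e : (Fin n → ℂ) × ℝ} (h : Good e) :
    ∃ a : Fin n → ℂ, (∀ j, ‖a j‖ < 1) ∧
      (∀ z, (Gp e).eval z = e.2 * ∏ j, (1 - (starRingEnd ℂ) (a j) * z)) ∧
      (∀ z, (Ap e).eval z = e.2 * ∏ j, (z - a j)) := by
  have hr := h.ne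
  have hdeg : (Ap e).natDegree ≤ n := by
    refine natDegree_add_le_of_degree_le (natDegree_C_mul_X_pow_le _ _) ?_
    refine natDegree_sum_le_of_forall_le _ _ fun i _ => ?_
    exact (natDegree_C_mul_X_pow_le _ _).trans (by omega)
  have hco : (Ap e).coeff n = e.2 := by
    simp only [Ap, coeff_add, finsetSum_coeff, coeff_C_mul, coeff_X_pow]
    rw [Finset.sum_eq_zero]
    · simp
    · intro i _
      have : n ≠ n - 1 - (i : ℕ) := by have := i.2; omega
      simp [this]
  have hnd : (Ap e).natDegree = n :=
    le_antisymm hdeg (le_natDegree_of_ne_zero (by rw [hco]; exact hr))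
  have hlc : (Ap e).leadingCoeff = e.2 := by rw [leadingCoeff, hnd, hco]
  have hsp : (Ap e).Splits := IsAlgClosed.splits _
  have hcard : (Ap e).roots.card = n := by rw [← hsp.natDegree_eq_card_roots, hnd]
  obtain ⟨a, ha, hprod⟩ := multiset_enum _ _ hcard
  have hA : ∀ z, (Ap e).eval z = e.2 * ∏ j, (z - a j) := fun z => by
    rw [hsp.eval_eq_prod_roots, hlc, hprod]
  refine ⟨a, fun j => ?_, fun z => ?_, hA⟩
  · by_contra hj
    push Not at hj
    have h0 : a j ≠ 0 := by intro h0; rw [h0] at hj; simp at hj; linarith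
    have hz : (Ap e).eval (a j) = 0 := by
      rw [hA]; simp [Finset.prod_eq_zero (Finset.mem_univ j)]
    rw [Ap_refl e h0] at hz
    have hG : (Gp e).eval ((starRingEnd ℂ) (a j))⁻¹ = 0 := by
      simpa [h0] using hz
    refine h _ ?_ hG
    rw [norm_inv, RCLike.norm_conj]
    exact inv_le_one_of_one_le₀ hj
  · by_cases hz : z = 0
    · simp [hz, Gp_eval_zero]
    · have hw : ((starRingEnd ℂ) z)⁻¹ ≠ 0 := by simpa using hz
      have h1 := Ap_refl e hw
      rw [hA] at h1
      simp only [map_inv₀, Complex.conj_conj, inv_inv] at h1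
      have hz' : (starRingEnd ℂ) z ≠ 0 := by simpa using hz
      have h2 : (starRingEnd ℂ) (eval z (Gp e)) = ((starRingEnd ℂ) z) ^ n * (e.2 * ∏ j, (((starRingEnd ℂ) z)⁻¹ - a j)) := by
        rw [h1, ← mul_assoc, ← mul_pow, mul_inv_cancel₀ hz', one_pow, one_mul]
      have h3 : ((starRingEnd ℂ) z) ^ n * ∏ j, (((starRingEnd ℂ) z)⁻¹ - a j)
          = ∏ j, (1 - a j * (starRingEnd ℂ) z) := by
        have : ((starRingEnd ℂ) z) ^ n = ∏ _j : Fin n, (starRingEnd ℂ) z := by simp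
        rw [this, ← Finset.prod_mul_distrib]
        refine Finset.prod_congr rfl fun j _ => ?_
        field_simp
      have h4 : (starRingEnd ℂ) (eval z (Gp e)) = e.2 * ∏ j, (1 - a j * (starRingEnd ℂ) z) := by
        rw [h2, ← h3]; ring
      have h5 := congrArg (starRingEnd ℂ) h4
      simpa using h5

lemma blaschke_factor_le {a z : ℂ} (ha : ‖a‖ ≤ 1) (hz : ‖z‖ ≤ 1) :
    ‖z - a‖ ≤ ‖1 - (starRingEnd ℂ) a * z‖ := by
  have h : ‖1 - (starRingEnd ℂ) a * z‖ ^ 2 - ‖z - a‖ ^ 2 = (1 - ‖a‖ ^ 2) * (1 - ‖z‖ ^ 2) := by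
    simp only [← Complex.normSq_eq_norm_sq, Complex.normSq_apply]
    simp
    ring
  have h1 : ‖a‖ ^ 2 ≤ 1 := pow_le_one₀ (norm_nonneg _) ha
  have h2 : ‖z‖ ^ 2 ≤ 1 := pow_le_one₀ (norm_nonneg _) hz
  have h3 : ‖z - a‖ ^ 2 ≤ ‖1 - (starRingEnd ℂ) a * z‖ ^ 2 := by
    nlinarith [mul_nonneg (sub_nonneg.2 h1) (sub_nonneg.2 h2)]
  exact (sq_le_sq₀ (norm_nonneg _) (norm_nonneg _)).1 h3

lemma norm_Ap_le {e : (Fin n → ℂ) × ℝ} (h : Good e) {z : ℂ} (hz : ‖z‖ ≤ 1) :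
    ‖(Ap e).eval z‖ ≤ ‖(Gp e).eval z‖ := by
  obtain ⟨a, ha, hG, hA⟩ := good_factor h
  rw [hG, hA, norm_mul, norm_mul, norm_prod, norm_prod]
  gcongr with j
  exact blaschke_factor_le (ha j).le hz

lemma norm_Gp_lower {e : (Fin n → ℂ) × ℝ} (h : Good e) {z : ℂ} (hz : ‖z‖ ≤ 1) :
    |e.2| * (1 - ‖z‖) ^ n ≤ ‖(Gp e).eval z‖ := by
  obtain ⟨a, ha, hG, hA⟩ := good_factor h
  rw [hG, norm_mul, norm_prod, Complex.norm_real, Real.norm_eq_abs]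
  gcongr
  have : (1 - ‖z‖) ^ n = ∏ _j : Fin n, (1 - ‖z‖) := by simp
  rw [this]
  refine Finset.prod_le_prod (fun _ _ => by linarith) fun j _ => ?_
  have h1 := norm_sub_norm_le (1 : ℂ) ((starRingEnd ℂ) (a j) * z)
  rw [norm_mul, RCLike.norm_conj, norm_one] at h1
  have h2 : ‖a j‖ * ‖z‖ ≤ 1 * ‖z‖ := by gcongr; exact (ha j).le
  linarith

lemma norm_Gp_upper {e : (Fin n → ℂ) × ℝ} (h : Good e) {z : ℂ} (hz : ‖z‖ ≤ 1) :
    ‖(Gp e).eval z‖ ≤ |e.2| * 2 ^ n := by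
  obtain ⟨a, ha, hG, hA⟩ := good_factor h
  rw [hG, norm_mul, norm_prod, Complex.norm_real, Real.norm_eq_abs]
  gcongr
  have : (2 : ℝ) ^ n = ∏ _j : Fin n, (2 : ℝ) := by simp
  rw [this]
  refine Finset.prod_le_prod (fun _ _ => norm_nonneg _) fun j _ => ?_
  have h1 := norm_sub_le (1 : ℂ) ((starRingEnd ℂ) (a j) * z)
  rw [norm_mul, RCLike.norm_conj, norm_one] at h1
  have h2 : ‖a j‖ * ‖z‖ ≤ 1 * 1 := by gcongr; exact (ha j).le
  linarith

lemma re_conj_mul_self (w : ℂ) : ((starRingEnd ℂ) w * w).re = ‖w‖ ^ 2 := by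
  rw [← Complex.normSq_eq_norm_sq, Complex.normSq_apply]; simp

lemma Dd_self (e : (Fin n → ℂ) × ℝ) (z : ℂ) :
    Dd e e z = 2 * (‖(Gp e).eval z‖ ^ 2 - ‖(Pp e).eval z‖ ^ 2) := by
  rw [Dd, Complex.sub_re, re_conj_mul_self, re_conj_mul_self]

lemma Dd_lower {e : (Fin n → ℂ) × ℝ} (h : Good e) {z : ℂ} (hz : ‖z‖ ≤ 1) :
    2 * (1 - ‖z‖ ^ 2) * ‖(Gp e).eval z‖ ^ 2 ≤ Dd e e z := by
  rw [Dd_self, Pp_eval, norm_mul, mul_pow]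
  have h1 : ‖(Ap e).eval z‖ ^ 2 ≤ ‖(Gp e).eval z‖ ^ 2 := by
    gcongr; exact norm_Ap_le h hz
  nlinarith [mul_le_mul_of_nonneg_left h1 (sq_nonneg ‖z‖)]

lemma Dd_pos {e : (Fin n → ℂ) × ℝ} (h : Good e) {z : ℂ} (hz : ‖z‖ < 1) : 0 < Dd e e z := by
  refine lt_of_lt_of_le ?_ (Dd_lower h hz.le)
  have h1 : 0 < ‖(Gp e).eval z‖ := norm_pos_iff.2 (h z hz.le)
  have h2 : ‖z‖ ^ 2 < 1 := pow_lt_one₀ (norm_nonneg _) hz two_ne_zero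
  have : 0 < 1 - ‖z‖ ^ 2 := by linarith
  positivity

/-- radial derivative of `Dd` -/
noncomputable def Rd (e q : (Fin n → ℂ) × ℝ) (s : ℝ) (u : ℂ) : ℝ :=
  2 * (((starRingEnd ℂ) (u * (Gp e).derivative.eval (s * u)) * (Gp q).eval (s * u)
        + (starRingEnd ℂ) ((Gp e).eval (s * u)) * (u * (Gp q).derivative.eval (s * u)))
    - ((starRingEnd ℂ) (u * (Pp e).derivative.eval (s * u)) * (Pp q).eval (s * u)
        + (starRingEnd ℂ) ((Pp e).eval (s * u)) * (u * (Pp q).derivative.eval (s * u)))).re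

lemma Dd_hasDerivAt (e q : (Fin n → ℂ) × ℝ) (s : ℝ) (u : ℂ) :
    HasDerivAt (fun s : ℝ => Dd e q (s * u)) (Rd e q s u) s := by
  have h1 := slice_hasDerivAt (Gp e) (Gp q) 0 u s
  have h2 := slice_hasDerivAt (Pp e) (Pp q) 0 u s
  simp only [zero_add] at h1 h2
  exact (hasDerivAt_re (h1.sub h2)).const_mul 2

lemma Rd_cont (e q : (Fin n → ℂ) × ℝ) : Continuous (fun x : ℝ × ℂ => Rd e q x.1 x.2) := by
  unfold Rd
  fun_prop

lemma Rd_one (e q : (Fin n → ℂ) × ℝ) {u : ℂ} (hu : ‖u‖ = 1) : Rd e q 1 u = - 2 * Td e q u := by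
  have h1 := Pp_deriv_circle e hu
  have h2 := Pp_deriv_circle q hu
  have h3 := Pp_circle e hu
  have h4 := Pp_circle q hu
  have hN : (starRingEnd ℂ) (u ^ (n + 1)) * u ^ (n + 1) = 1 := by
    rw [← Complex.normSq_eq_conj_mul_self, Complex.normSq_eq_norm_sq]; simp [hu]
  simp only [Rd, Complex.ofReal_one, one_mul]
  rw [h1, h2, h3, h4]
  have e1 : (starRingEnd ℂ) (u ^ (n + 1) * ((n + 1) * (starRingEnd ℂ) ((Gp e).eval u)
      - (starRingEnd ℂ) (u * (Gp e).derivative.eval u))) * (u ^ (n + 1) * (starRingEnd ℂ) ((Gp q).eval u))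
      = ((n + 1) * ((Gp e).eval u)
      - (u * (Gp e).derivative.eval u)) * ((starRingEnd ℂ) ((Gp q).eval u)) := by
    simp only [map_mul, map_sub, map_add, map_natCast, map_one, Complex.conj_conj]
    linear_combination (((n + 1) * ((Gp e).eval u)
      - (u * (Gp e).derivative.eval u)) * ((starRingEnd ℂ) ((Gp q).eval u))) * hN
  have e2 : (starRingEnd ℂ) (u ^ (n + 1) * (starRingEnd ℂ) ((Gp e).eval u)) *
      (u ^ (n + 1) * ((n + 1) * (starRingEnd ℂ) ((Gp q).eval u)
      - (starRingEnd ℂ) (u * (Gp q).derivative.eval u)))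
      = ((Gp e).eval u) * ((n + 1) * (starRingEnd ℂ) ((Gp q).eval u)
      - (starRingEnd ℂ) (u * (Gp q).derivative.eval u)) := by
    simp only [map_mul, Complex.conj_conj]
    linear_combination ((Gp e).eval u) * ((n + 1) * (starRingEnd ℂ) ((Gp q).eval u)
      - (starRingEnd ℂ) (u) * (starRingEnd ℂ) ( (Gp q).derivative.eval u)) * hN
  rw [e1, e2]
  simp only [Td, Complex.add_re, Complex.sub_re, Complex.mul_re, Complex.conj_re, Complex.conj_im,
    Complex.sub_im, Complex.add_im, Complex.mul_im, Complex.natCast_re, Complex.natCast_im,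
    Complex.one_re, Complex.one_im]
  ring

lemma Dd_circle (e q : (Fin n → ℂ) × ℝ) {u : ℂ} (hu : ‖u‖ = 1) : Dd e q u = 0 := by
  have hN : (starRingEnd ℂ) (u ^ (n + 1)) * u ^ (n + 1) = 1 := by
    rw [← Complex.normSq_eq_conj_mul_self, Complex.normSq_eq_norm_sq]; simp [hu]
  have : (starRingEnd ℂ) ((Pp e).eval u) * (Pp q).eval u =
      (Gp e).eval u * (starRingEnd ℂ) ((Gp q).eval u) := by
    rw [Pp_circle e hu, Pp_circle q hu, map_mul, Complex.conj_conj]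
    linear_combination (Gp e).eval u * (starRingEnd ℂ) ((Gp q).eval u) * hN
  rw [Dd, this]
  simp

lemma left_deriv_nonpos {f : ℝ → ℝ} {d : ℝ} (h : HasDerivAt f d 1) (h1 : f 1 = 0)
    (h2 : ∀ s, 0 < s → s < 1 → 0 ≤ f s) : d ≤ 0 := by
  have ht := (hasDerivAt_iff_tendsto_slope_left_right.1 h).1
  refine le_of_tendsto ht ?_
  have : Set.Ioo (0 : ℝ) 1 ∈ 𝓝[<] (1 : ℝ) := Ioo_mem_nhdsLT one_pos
  filter_upwards [this] with s hs
  rw [slope_def_field, h1, sub_zero]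
  exact div_nonpos_of_nonneg_of_nonpos (h2 s hs.1 hs.2) (by linarith [hs.2])

lemma Tq_lower {e : (Fin n → ℂ) × ℝ} (h : Good e) {u : ℂ} (hu : ‖u‖ = 1) :
    ‖(Gp e).eval u‖ ^ 2 ≤ Tq e u := by
  have h1 := Dd_hasDerivAt e e 1 u
  have h2 := (hasDerivAt_re (slice_hasDerivAt (Gp e) (Gp e) 0 u 1))
  have h3 : HasDerivAt (fun s : ℝ => 2 * (1 - s ^ 2)) (2 * (-(2 * 1))) 1 := by
    have := ((hasDerivAt_pow 2 (1 : ℝ)).const_sub 1).const_mul 2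
    simpa using this
  have h4 := h1.sub (h3.mul h2)
  have h5 := left_deriv_nonpos h4 (by simp [Dd_circle e e hu]) (fun s hs0 hs1 => by
    have hn : ‖(s : ℂ) * u‖ = s := by simp [hu, abs_of_pos hs0]
    have := Dd_lower h (z := s * u) (by rw [hn]; exact hs1.le)
    rw [hn] at this
    simp only [Pi.sub_apply, Pi.mul_apply, zero_add, re_conj_mul_self]
    linarith)
  rw [Rd_one e e hu, Td_self] at h5
  simp only [zero_add, re_conj_mul_self, Complex.ofReal_one, one_mul] at h5
  linarith

end

section
variable {n : ℕ}

lemma boundary_est (e q : (Fin n → ℂ) × ℝ) (hT : ∀ u : ℂ, ‖u‖ = 1 → Td e q u = 0) {δ : ℝ} (hδ : 0 < δ) :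
    ∃ ρ : ℝ, 0 < ρ ∧ ρ < 1 ∧ ∀ z : ℂ, ρ < ‖z‖ → ‖z‖ < 1 → |Dd e q z| ≤ δ * (1 - ‖z‖) := by
  have hev : ∀ᶠ s in 𝓝 (1 : ℝ), ∀ u ∈ sphere (0 : ℂ) 1, |Rd e q s u| < δ := by
    refine IsCompact.eventually_forall_of_forall_eventually (isCompact_sphere _ _) fun u hu => ?_
    have hu1 : ‖u‖ = 1 := by simpa using hu
    have hc : Continuous (fun x : ℝ × ℂ => |Rd e q x.1 x.2|) := (Rd_cont e q).abs
    have h0 : |Rd e q 1 u| < δ := by rw [Rd_one e q hu1, hT u hu1]; simpa using hδ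
    exact hc.continuousAt.eventually_lt continuousAt_const h0
  obtain ⟨η, hη, hball⟩ := Metric.eventually_nhds_iff.1 hev
  refine ⟨max (1 / 2) (1 - η), by positivity, max_lt (by norm_num) (by linarith), fun z hz1 hz2 => ?_⟩
  have hz0 : 0 < ‖z‖ := lt_of_le_of_lt (by positivity) hz1
  have hzη : 1 - η < ‖z‖ := lt_of_le_of_lt (le_max_right _ _) hz1
  set u : ℂ := z / (‖z‖ : ℂ) with hu
  have hne : (‖z‖ : ℂ) ≠ 0 := by exact_mod_cast hz0.ne'
  have hu1 : ‖u‖ = 1 := by rw [hu, norm_div]; simp [hz0.ne']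
  have hzu : ((‖z‖ : ℝ) : ℂ) * u = z := by rw [hu]; field_simp
  have := (convex_Icc ‖z‖ 1).norm_image_sub_le_of_norm_hasDerivWithin_le
    (f := fun s : ℝ => Dd e q (s * u)) (f' := fun s => Rd e q s u) (C := δ) (x := 1) (y := ‖z‖)
    (fun s _ => (Dd_hasDerivAt e q s u).hasDerivWithinAt) (fun s hs => by
      refine (hball (y := s) ?_ u (by simpa using hu1)).le
      rw [Real.dist_eq, abs_lt]; constructor <;> linarith [hs.1, hs.2])
    (by simp [hz2.le]) (by simp [hz2.le])
  rw [hzu] at this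
  simp only [Complex.ofReal_one, one_mul, Dd_circle e q hu1, sub_zero, Real.norm_eq_abs] at this
  rwa [abs_sub_comm, abs_of_pos (by linarith : 0 < 1 - ‖z‖)] at this

lemma local_contra {e q : (Fin n → ℂ) × ℝ} (h : Good e) (hW : Wd e q = 0) {p : ℂ} (hp : ‖p‖ < 1)
    {κ ε : ℝ} (hε : 0 < ε) (ht : 0 < κ - ε * ‖p‖ ^ 2)
    (hm : IsLocalMin (fun z => (κ - ε * ‖z‖ ^ 2) * (Dd e e z / 2) + Dd e q z) p)
    (h0 : (κ - ε * ‖p‖ ^ 2) * (Dd e e p / 2) + Dd e q p = 0) : False := by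
  let f : Fin 4 → ℂ[X] := ![Gp e, Pp e, X * Gp e, X * Pp e]
  let g : Fin 4 → ℂ[X] := ![C (κ : ℂ) * Gp e + 2 * Gp q, -(C (κ : ℂ) * Pp e + 2 * Pp q),
    - (C (ε : ℂ) * (X * Gp e)), C (ε : ℂ) * (X * Pp e)]
  have hsum : (fun z => (κ - ε * ‖z‖ ^ 2) * (Dd e e z / 2) + Dd e q z) =
      fun z => ∑ i, ((starRingEnd ℂ) ((f i).eval z) * (g i).eval z).re := by
    funext z
    simp only [Fin.sum_univ_four, f, g, Dd, ← Complex.normSq_eq_norm_sq, Complex.normSq_apply]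
    simp
    ring
  rw [hsum] at hm
  obtain ⟨h1, h2⟩ := min_tests _ f g p hm
  have hWp : (Pp q).derivative.eval p * (Gp e).eval p + (Pp e).derivative.eval p * (Gp q).eval p
    - (Pp q).eval p * (Gp e).derivative.eval p - (Pp e).eval p * (Gp q).derivative.eval p = 0 := by
    have := congrArg (eval p) hW
    simpa [Wd] using this
  have hWc := congrArg (starRingEnd ℂ) hWp
  simp only [map_sub, map_add, map_mul, map_zero] at hWc
  have hre : ∀ w : ℂ, ((w.re : ℝ) : ℂ) = (w + (starRingEnd ℂ) w) / 2 := fun w => by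
    rw [Complex.add_conj]; push_cast; ring
  have hnz : ((‖p‖ : ℝ) : ℂ) ^ 2 = p * (starRingEnd ℂ) p := by
    rw [Complex.mul_conj, Complex.normSq_eq_norm_sq]; push_cast; rfl
  have h0c := congrArg (fun x : ℝ => (x : ℂ)) h0
  simp only [Dd] at h0c
  push_cast at h0c
  simp only [hre, map_sub, map_add, map_mul, Complex.conj_conj, hnz] at h0c
  have hc2 : (starRingEnd ℂ) (2 : ℂ) = 2 := map_ofNat _ 2
  simp [Fin.sum_univ_four, f, g, hc2] at h1
  have h1c := congrArg (starRingEnd ℂ) h1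
  simp [hc2] at h1c
  have key := key_algebra ((Gp e).eval p) ((Pp e).eval p) ((Gp q).eval p) ((Pp q).eval p)
    ((Gp e).derivative.eval p) ((Pp e).derivative.eval p) ((Gp q).derivative.eval p) ((Pp q).derivative.eval p)
    ((starRingEnd ℂ) ((Gp e).eval p)) ((starRingEnd ℂ) ((Pp e).eval p)) ((starRingEnd ℂ) ((Gp q).eval p))
    ((starRingEnd ℂ) ((Pp q).eval p))
    ((starRingEnd ℂ) ((Gp e).derivative.eval p)) ((starRingEnd ℂ) ((Pp e).derivative.eval p))
    ((starRingEnd ℂ) ((Gp q).derivative.eval p)) ((starRingEnd ℂ) ((Pp q).derivative.eval p))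
    p ((starRingEnd ℂ) p) ((κ : ℂ) - ε * (p * (starRingEnd ℂ) p)) ε _ rfl
    (by linear_combination h0c) (by linear_combination h1 / 2) (by linear_combination h1c / 2) hWp hWc
  have hD := Dd_pos h hp
  have hDc : ((Dd e e p / 2 : ℝ) : ℂ) = (Gp e).eval p * (starRingEnd ℂ) ((Gp e).eval p)
      - (Pp e).eval p * (starRingEnd ℂ) ((Pp e).eval p) := by
    simp only [Dd]; push_cast
    simp only [hre, map_sub, map_mul, Complex.conj_conj]; ring
  have hS : ((∑ i, ((starRingEnd ℂ) ((f i).derivative.eval p) * (g i).derivative.eval p).re : ℝ) : ℂ)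
      = ((κ : ℂ) - ε * (p * (starRingEnd ℂ) p)) * ((Gp e).derivative.eval p * (starRingEnd ℂ) ((Gp e).derivative.eval p)
        - (Pp e).derivative.eval p * (starRingEnd ℂ) ((Pp e).derivative.eval p))
      + ((Gp q).derivative.eval p * (starRingEnd ℂ) ((Gp e).derivative.eval p)
        + (starRingEnd ℂ) ((Gp q).derivative.eval p) * (Gp e).derivative.eval p
        - (Pp q).derivative.eval p * (starRingEnd ℂ) ((Pp e).derivative.eval p)
        - (starRingEnd ℂ) ((Pp q).derivative.eval p) * (Pp e).derivative.eval p)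
      - ε * ((Gp e).eval p * (starRingEnd ℂ) ((Gp e).eval p) - (Pp e).eval p * (starRingEnd ℂ) ((Pp e).eval p))
      - ε * (p * ((Gp e).derivative.eval p * (starRingEnd ℂ) ((Gp e).eval p)
          - (Pp e).derivative.eval p * (starRingEnd ℂ) ((Pp e).eval p))
        + (starRingEnd ℂ) p * ((starRingEnd ℂ) ((Gp e).derivative.eval p) * (Gp e).eval p
          - (starRingEnd ℂ) ((Pp e).derivative.eval p) * (Pp e).eval p)) := by
    push_cast
    simp only [hre]
    simp [Fin.sum_univ_four, f, g, hc2]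
    ring
  rw [← hS, ← hDc] at key
  have hww : ((Pp e).derivative.eval p * (Gp e).eval p - (Pp e).eval p * (Gp e).derivative.eval p) *
      ((starRingEnd ℂ) ((Pp e).derivative.eval p) * (starRingEnd ℂ) ((Gp e).eval p)
        - (starRingEnd ℂ) ((Pp e).eval p) * (starRingEnd ℂ) ((Gp e).derivative.eval p)) =
      ((Complex.normSq ((Pp e).derivative.eval p * (Gp e).eval p - (Pp e).eval p * (Gp e).derivative.eval p) : ℝ) : ℂ) := by
    rw [← Complex.mul_conj]; simp only [map_sub, map_mul]
  rw [hww, ← hnz] at key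
  have keyR := Complex.ofReal_injective (by push_cast; push_cast at key; exact key :
    ((Dd e e p / 2 * (∑ i, ((starRingEnd ℂ) ((f i).derivative.eval p) * (g i).derivative.eval p).re) : ℝ) : ℂ)
    = ((- ε * (Dd e e p / 2) ^ 2 - 2 * (κ - ε * ‖p‖ ^ 2) * Complex.normSq ((Pp e).derivative.eval p * (Gp e).eval p - (Pp e).eval p * (Gp e).derivative.eval p) : ℝ) : ℂ))
  have k1 := mul_nonneg (by positivity : 0 ≤ Dd e e p / 2) h2
  have k2 : 0 < ε * (Dd e e p / 2) ^ 2 := by positivity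
  have k3 := mul_nonneg ht.le (Complex.normSq_nonneg ((Pp e).derivative.eval p * (Gp e).eval p - (Pp e).eval p * (Gp e).derivative.eval p))
  linarith

lemma Dd_cont (e q : (Fin n → ℂ) × ℝ) : Continuous (Dd e q) := by
  unfold Dd; fun_prop

lemma Dd_nonneg {e q : (Fin n → ℂ) × ℝ} (h : Good e) (hW : Wd e q = 0) {z0 : ℂ} (hz0 : ‖z0‖ < 1) :
    0 ≤ Dd e q z0 := by
  by_contra hneg
  push Not at hneg
  have hT : ∀ u : ℂ, ‖u‖ = 1 → Td e q u = 0 := fun u hu => by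
    have := Wd_circle e q hu
    rw [hW, eval_zero] at this
    have h2 : (Td e q u : ℂ) = 0 := by
      have h3 := pow_ne_zero n (ne_zero_circle hu)
      exact (mul_eq_zero.1 this.symm).resolve_left h3
    exact_mod_cast h2
  obtain ⟨m, hmpos, hm⟩ : ∃ m : ℝ, 0 < m ∧ ∀ z : ℂ, ‖z‖ ≤ 1 → m ≤ ‖(Gp e).eval z‖ := by
    obtain ⟨x, hx, hmin⟩ := (isCompact_closedBall (0 : ℂ) 1).exists_isMinOn ⟨0, by simp⟩
      (f := fun z => ‖(Gp e).eval z‖) (by fun_prop)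
    refine ⟨‖(Gp e).eval x‖, norm_pos_iff.2 (h x (by simpa using hx)), fun z hz => hmin (by simpa using hz)⟩
  have hlow : ∀ z : ℂ, ‖z‖ < 1 → m ^ 2 * (1 - ‖z‖) ≤ Dd e e z / 2 := fun z hz => by
    have h1 := Dd_lower h hz.le
    have h2 : m ^ 2 ≤ ‖(Gp e).eval z‖ ^ 2 := by gcongr; exact hm z hz.le
    have h3 : 1 - ‖z‖ ≤ 1 - ‖z‖ ^ 2 := by nlinarith [norm_nonneg z]
    have h4 : (1 - ‖z‖) * m ^ 2 ≤ (1 - ‖z‖ ^ 2) * ‖(Gp e).eval z‖ ^ 2 :=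
      mul_le_mul h3 h2 (by positivity) (by nlinarith [norm_nonneg z])
    linarith
  set σ : ℂ → ℝ := fun z => - Dd e q z / (Dd e e z / 2) with hσ
  have hDp : ∀ z : ℂ, ‖z‖ < 1 → 0 < Dd e e z / 2 := fun z hz => by have := Dd_pos h hz; positivity
  have hσ0 : 0 < σ z0 := div_pos (by linarith) (hDp z0 hz0)
  set ε := σ z0 / 2 with hεd
  have hε : 0 < ε := by positivity
  set Φ : ℂ → ℝ := fun z => σ z + ε * (‖z‖ ^ 2 - 1) with hΦ
  have hΦ0 : 0 < Φ z0 := by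
    simp only [hΦ]
    have : 0 ≤ ε * ‖z0‖ ^ 2 := by positivity
    have h2 : σ z0 = 2 * ε := by rw [hεd]; ring
    rw [h2]; nlinarith
  obtain ⟨ρ, hρ0, hρ1, hρ⟩ := boundary_est e q hT (δ := Φ z0 / 2 * m ^ 2) (by positivity)
  have hout : ∀ z : ℂ, ρ < ‖z‖ → ‖z‖ < 1 → Φ z ≤ Φ z0 / 2 := fun z h1 h2 => by
    have h3 := hρ z h1 h2
    have h4 := hlow z h2
    have h5 : σ z ≤ Φ z0 / 2 := by
      rw [hσ]; simp only
      rw [div_le_iff₀ (hDp z h2)]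
      have h6 : Φ z0 / 2 * (m ^ 2 * (1 - ‖z‖)) ≤ Φ z0 / 2 * (Dd e e z / 2) := by gcongr
      linarith [neg_abs_le (Dd e q z), mul_assoc (Φ z0 / 2) (m ^ 2) (1 - ‖z‖)]
    have h6 : ε * (‖z‖ ^ 2 - 1) ≤ 0 := by
      have : ‖z‖ ^ 2 ≤ 1 := pow_le_one₀ (norm_nonneg _) h2.le
      exact mul_nonpos_of_nonneg_of_nonpos hε.le (by linarith)
    simp only [hΦ]; linarith
  have hΦc : ContinuousOn Φ (closedBall (0 : ℂ) ρ) := by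
    have c1 := Dd_cont e q
    have c2 := Dd_cont e e
    refine ContinuousOn.add (ContinuousOn.div (by fun_prop) (by fun_prop) fun z hz => ?_) (by fun_prop)
    exact (hDp z (lt_of_le_of_lt (by simpa using hz) hρ1)).ne'
  have hz0ρ : ‖z0‖ ≤ ρ := by
    by_contra hc
    push Not at hc
    linarith [hout z0 hc hz0]
  obtain ⟨p, hp, hmax⟩ := (isCompact_closedBall (0 : ℂ) ρ).exists_isMaxOn ⟨0, by simp [hρ0.le]⟩ hΦc
  have hp1 : ‖p‖ < 1 := lt_of_le_of_lt (by simpa using hp) hρ1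
  have hpz0 : Φ z0 ≤ Φ p := hmax (by simpa using hz0ρ)
  have hglob : ∀ z : ℂ, ‖z‖ < 1 → Φ z ≤ Φ p := fun z hz => by
    by_cases hc : ‖z‖ ≤ ρ
    · exact hmax (by simpa using hc)
    · push Not at hc; linarith [hout z hc hz]
  have hrel : ∀ z : ℂ, ‖z‖ < 1 → (Φ p + ε - ε * ‖z‖ ^ 2) * (Dd e e z / 2) + Dd e q z
      = (Φ p - Φ z) * (Dd e e z / 2) := fun z hz => by
    have h1 : Dd e q z = - σ z * (Dd e e z / 2) := by
      rw [hσ]; simp only; have := hDp z hz; rw [neg_mul, div_mul_cancel₀ _ this.ne']; ring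
    rw [h1]; simp only [hΦ]; ring
  refine local_contra h hW hp1 (κ := Φ p + ε) hε ?_ ?_ ?_
  · have : ‖p‖ ^ 2 ≤ 1 := pow_le_one₀ (norm_nonneg _) hp1.le
    nlinarith
  · have hb : ball (0 : ℂ) 1 ∈ 𝓝 p := isOpen_ball.mem_nhds (by simpa using hp1)
    filter_upwards [hb] with z hz
    have hz1 : ‖z‖ < 1 := by simpa using hz
    rw [hrel p hp1, hrel z hz1, sub_self, zero_mul]
    exact mul_nonneg (by linarith [hglob z hz1]) (hDp z hz1).le
  · rw [hrel p hp1, sub_self, zero_mul]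

lemma inf_inj {e q : (Fin n → ℂ) × ℝ} (h : Good e) (hW : Wd e q = 0) : q = 0 := by
  have hWn : Wd e (-q) = 0 := by
    have : Wd e (-q) = - Wd e q := by simp only [Wd, Gp_neg, Pp_neg, derivative_neg]; ring
    rw [this, hW, neg_zero]
  have hDz : ∀ z : ℂ, ‖z‖ < 1 → Dd e q z = 0 := fun z hz => by
    have h1 := Dd_nonneg h hW hz
    have h2 := Dd_nonneg h hWn hz
    have : Dd e (-q) z = - Dd e q z := by simp [Dd, Gp_neg, Pp_neg]; ring
    linarith
  let f : Fin 4 → ℂ[X] := ![Gp e, Gp q, Pp e, Pp q]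
  let g : Fin 4 → ℂ[X] := ![Gp q, Gp e, -Pp q, -Pp e]
  have hsum : ∀ z ∈ ball (0 : ℂ) 1, ∑ i, (starRingEnd ℂ) ((f i).eval z) * (g i).eval z = 0 := by
    intro z hz
    have h1 := hDz z (by simpa using hz)
    have h2 := congrArg (fun x : ℝ => (x : ℂ)) h1
    have hre : ∀ w : ℂ, ((w.re : ℝ) : ℂ) = (w + (starRingEnd ℂ) w) / 2 := fun w => by
      rw [Complex.add_conj]; push_cast; ring
    simp only [Dd] at h2
    push_cast at h2
    simp only [hre, map_sub, map_mul, Complex.conj_conj] at h2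
    simp [Fin.sum_univ_four, f, g]
    linear_combination h2
  have hne := h.ne
  have hk := fun k => dbar_zero_iter Finset.univ f g hsum k 0 (by simp)
  have hq2 : (q.2 : ℂ) = 0 := by
    have := hk 0
    simp [Fin.sum_univ_four, f, g, Gp_eval_zero, Pp_eval_zero] at this
    have h2 : (e.2 : ℂ) * q.2 = 0 := by linear_combination this / 2
    exact (mul_eq_zero.1 h2).resolve_left hne
  apply Gp_inj
  ext k
  have h1 := hk k
  simp [Fin.sum_univ_four, f, g, Gp_eval_zero, Pp_eval_zero, hq2] at h1
  have h2 : (derivative^[k] (Gp q)).eval 0 = 0 := by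
    rcases h1 with h1 | h1
    · exact absurd (by simp [h1]) hne
    · exact h1
  rw [← coeff_zero_eq_eval_zero, coeff_iterate_derivative] at h2
  simp only [zero_add, Nat.descFactorial_self, nsmul_eq_mul, mul_eq_zero] at h2
  rcases h2 with h2 | h2
  · exact absurd h2 (by exact_mod_cast Nat.factorial_ne_zero k)
  · simpa using h2

end


section
variable {n : ℕ}

lemma exists_zeta (m : ℕ) (hm : m ≠ 0) : ∃ ζ : Fin m → ℂ, Function.Injective ζ ∧ ∀ k, ‖ζ k‖ = 1 := by
  have h := Complex.isPrimitiveRoot_exp m hm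
  refine ⟨fun k => Complex.exp (2 * Real.pi * Complex.I / m) ^ (k : ℕ), fun i j hij => ?_, fun k => ?_⟩
  · exact Fin.ext (h.pow_inj i.2 j.2 hij)
  · rw [norm_pow, h.norm'_eq_one hm, one_pow]

/-- evaluation as a real linear map in the parameter -/
noncomputable def Lev (n : ℕ) (z : ℂ) : ((Fin n → ℂ) × ℝ) →ₗ[ℝ] ℂ where
  toFun e := (Gp e).eval z
  map_add' e q := by rw [Gp_add, eval_add]
  map_smul' s q := by rw [Gp_smul]; simp

noncomputable def Lev' (n : ℕ) (z : ℂ) : ((Fin n → ℂ) × ℝ) →ₗ[ℝ] ℂ where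
  toFun e := (Gp e).derivative.eval z
  map_add' e q := by rw [Gp_add, derivative_add, eval_add]
  map_smul' s q := by rw [Gp_smul]; simp

lemma Tq_contDiff (z : ℂ) : ContDiff ℝ 1 (fun e : (Fin n → ℂ) × ℝ => Tq e z) := by
  have h1 : ContDiff ℝ 1 (fun e : (Fin n → ℂ) × ℝ => (Gp e).eval z) :=
    (LinearMap.toContinuousLinearMap (Lev n z)).contDiff
  have h2 : ContDiff ℝ 1 (fun e : (Fin n → ℂ) × ℝ => (Gp e).derivative.eval z) :=
    (LinearMap.toContinuousLinearMap (Lev' n z)).contDiff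
  have h3 : ContDiff ℝ 1 (fun e : (Fin n → ℂ) × ℝ => (starRingEnd ℂ) ((Gp e).eval z)) :=
    Complex.conjCLE.contDiff.comp h1
  have h4 : ContDiff ℝ 1 (fun e : (Fin n → ℂ) × ℝ => ((starRingEnd ℂ) ((Gp e).eval z) * (Gp e).eval z).re) :=
    Complex.reCLM.contDiff.comp (h3.mul h1)
  have h5 : ContDiff ℝ 1 (fun e : (Fin n → ℂ) × ℝ => ((starRingEnd ℂ) ((Gp e).eval z) * (z * (Gp e).derivative.eval z)).re) :=
    Complex.reCLM.contDiff.comp (h3.mul (contDiff_const.mul h2))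
  exact (contDiff_const.mul h4).sub (contDiff_const.mul h5)

/-- the finite-dimensional map -/
noncomputable def Fm {m : ℕ} (ζ : Fin m → ℂ) (e : (Fin n → ℂ) × ℝ) : Fin m → ℝ := fun k => Tq e (ζ k)

lemma Fm_contDiff {m : ℕ} (ζ : Fin m → ℂ) : ContDiff ℝ 1 (Fm (n := n) ζ) :=
  contDiff_pi.2 fun k => Tq_contDiff (ζ k)

lemma Fm_deriv {m : ℕ} (ζ : Fin m → ℂ) (e q : (Fin n → ℂ) × ℝ) (k : Fin m) :
    fderiv ℝ (Fm ζ) e q k = Td e q (ζ k) := by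
  have h1 : HasFDerivAt (Fm ζ) (fderiv ℝ (Fm ζ) e) e :=
    ((Fm_contDiff ζ).differentiable one_ne_zero e).hasFDerivAt
  have h2 := hasDerivAt_pi.1 (h1.hasLineDerivAt q) k
  have h3 : HasDerivAt (fun s : ℝ => Tq e (ζ k) + s * Td e q (ζ k) + s ^ 2 * Tq q (ζ k))
      (0 + 1 * Td e q (ζ k) + (2 * 0) * Tq q (ζ k)) 0 := by
    have a := ((hasDerivAt_id (0 : ℝ)).mul_const (Td e q (ζ k)))
    have b := ((hasDerivAt_pow 2 (0 : ℝ)).mul_const (Tq q (ζ k)))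
    have := ((hasDerivAt_const (0 : ℝ) (Tq e (ζ k))).add a).add b
    refine (this.congr_deriv ?_)
    simp
  have h4 : (fun s : ℝ => Fm ζ (e + s • q) k) =
      fun s : ℝ => Tq e (ζ k) + s * Td e q (ζ k) + s ^ 2 * Tq q (ζ k) := by
    funext s; exact Tq_add_smul e q s (ζ k)
  rw [h4] at h2
  have := h2.unique h3
  rw [this]; ring

lemma good_nhds {e : (Fin n → ℂ) × ℝ} (h : Good e) : ∀ᶠ e' in 𝓝 e, Good e' := by
  have : ∀ᶠ e' in 𝓝 e, ∀ z ∈ closedBall (0 : ℂ) 1, (Gp e').eval z ≠ 0 := by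
    refine IsCompact.eventually_forall_of_forall_eventually (isCompact_closedBall _ _) fun z hz => ?_
    exact (Gp_cont (n := n)).continuousAt.eventually_ne (h z (by simpa using hz))
  filter_upwards [this] with e' he' z hz
  exact he' z (by simpa using hz)

lemma open_lemma {ζ : Fin (2 * n + 1) → ℂ} (hi : Function.Injective ζ) (hζ : ∀ k, ‖ζ k‖ = 1)
    {e : (Fin n → ℂ) × ℝ} (h : Good e) : ∀ᶠ y in 𝓝 (Fm ζ e), ∃ e' : (Fin n → ℂ) × ℝ, Good e' ∧ Fm ζ e' = y := by
  have hs : HasStrictFDerivAt (Fm ζ) (fderiv ℝ (Fm ζ) e) e :=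
    (Fm_contDiff ζ).contDiffAt.hasStrictFDerivAt one_ne_zero
  have hinj : Function.Injective (fderiv ℝ (Fm ζ) e : ((Fin n → ℂ) × ℝ) →ₗ[ℝ] (Fin (2 * n + 1) → ℝ)) := by
    rw [← LinearMap.ker_eq_bot, LinearMap.ker_eq_bot']
    intro q hq
    apply inf_inj h
    refine Polynomial.eq_zero_of_degree_lt_of_eval_index_eq_zero (s := Finset.univ) (v := ζ) hi.injOn ?_ ?_
    · simpa using Wd_degree e q
    · intro k _
      have : fderiv ℝ (Fm ζ) e q k = 0 := congrFun hq k
      rw [Fm_deriv] at this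
      rw [Wd_circle e q (hζ k), this]; simp
  have hsurj : Function.Surjective (fderiv ℝ (Fm ζ) e : ((Fin n → ℂ) × ℝ) →ₗ[ℝ] (Fin (2 * n + 1) → ℝ)) := by
    refine (LinearMap.injective_iff_surjective_of_finrank_eq_finrank ?_).1 hinj
    simp [Module.finrank_prod, Module.finrank_pi_fintype, Complex.finrank_real_complex]
    ring
  have hmap := hs.map_nhds_eq_of_surj (LinearMap.range_eq_top.2 hsurj)
  rw [← hmap]
  have := image_mem_map (m := Fm ζ) (good_nhds h)
  filter_upwards [this] with y hy
  obtain ⟨e', h1, h2⟩ := hy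
  exact ⟨e', h1, h2⟩

/-- target polynomial -/
noncomputable def Rp (b : Fin n → ℂ) : ℂ[X] := ∏ j, ((X - C (b j)) * (1 - C ((starRingEnd ℂ) (b j)) * X))

noncomputable def Tg (b : Fin n → ℂ) (u : ℂ) : ℝ := ∏ j, ‖u - b j‖ ^ 2

lemma Rp_circle (b : Fin n → ℂ) {u : ℂ} (hu : ‖u‖ = 1) : (Rp b).eval u = u ^ n * (Tg b u : ℂ) := by
  have h1 : (starRingEnd ℂ) u * u = 1 := by
    rw [← Complex.normSq_eq_conj_mul_self, Complex.normSq_eq_norm_sq]; simp [hu]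
  have : u ^ n = ∏ _j : Fin n, u := by simp
  rw [Rp, Tg, eval_prod, Complex.ofReal_prod, this, ← Finset.prod_mul_distrib]
  refine Finset.prod_congr rfl fun j _ => ?_
  rw [← Complex.normSq_eq_norm_sq, ← Complex.mul_conj]
  simp
  linear_combination (- (u - b j)) * h1

lemma Rp_natDegree (b : Fin n → ℂ) : (Rp b).natDegree ≤ 2 * n := by
  refine (natDegree_prod_le _ _).trans ?_
  have : ∀ j ∈ Finset.univ, ((X - C (b j)) * (1 - C ((starRingEnd ℂ) (b j)) * X)).natDegree ≤ 2 := by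
    intro j _
    compute_degree
  refine (Finset.sum_le_sum this).trans ?_
  simp; omega

lemma Wp_eq {ζ : Fin (2 * n + 1) → ℂ} (hi : Function.Injective ζ) (hζ : ∀ k, ‖ζ k‖ = 1)
    {e : (Fin n → ℂ) × ℝ} {b : Fin n → ℂ} (h : ∀ k, Tq e (ζ k) = Tg b (ζ k)) : Wp e = Rp b := by
  have h2 : Wd e e = 2 * Rp b := by
    rw [← sub_eq_zero]
    refine Polynomial.eq_zero_of_degree_lt_of_eval_index_eq_zero (s := Finset.univ) (v := ζ) hi.injOn ?_ ?_
    · simp only [Finset.card_univ, Fintype.card_fin]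
      refine lt_of_le_of_lt (degree_sub_le _ _) (max_lt (Wd_degree e e) ?_)
      have : (2 * Rp b : ℂ[X]) = C 2 * Rp b := by rw [map_ofNat]
      rw [this]
      have h3 : (C 2 * Rp b).natDegree ≤ 2 * n := (natDegree_C_mul_le _ _).trans (Rp_natDegree b)
      exact lt_of_le_of_lt (degree_le_of_natDegree_le h3) (by exact_mod_cast Nat.lt_succ_self _)
    · intro k _
      rw [eval_sub, Wd_circle e e (hζ k), Td_self, h k, eval_mul, Rp_circle b (hζ k)]
      simp; ring
  rw [Wd_self] at h2
  exact mul_left_cancel₀ two_ne_zero h2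

lemma Tq_eq {e : (Fin n → ℂ) × ℝ} {b : Fin n → ℂ} (h : Wp e = Rp b) {u : ℂ} (hu : ‖u‖ = 1) :
    Tq e u = Tg b u := by
  have h1 := Wp_circle e hu
  rw [h, Rp_circle b hu] at h1
  have := mul_left_cancel₀ (pow_ne_zero n (ne_zero_circle hu)) h1
  exact_mod_cast this.symm

lemma Tg_pos {b : Fin n → ℂ} (hb : ∀ j, ‖b j‖ < 1) {u : ℂ} (hu : ‖u‖ = 1) : 0 < Tg b u := by
  refine Finset.prod_pos fun j _ => ?_
  have : u - b j ≠ 0 := by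
    intro h0
    have h1 := hb j
    rw [← sub_eq_zero.1 h0, hu] at h1
    exact lt_irrefl _ h1
  positivity

lemma Tg_le {b : Fin n → ℂ} (hb : ∀ j, ‖b j‖ < 1) {u : ℂ} (hu : ‖u‖ = 1) : Tg b u ≤ 4 ^ n := by
  have : (4 : ℝ) ^ n = ∏ _j : Fin n, (4 : ℝ) := by simp
  rw [this]
  refine Finset.prod_le_prod (fun j _ => by positivity) fun j _ => ?_
  have h1 : ‖u - b j‖ ≤ 2 := (norm_sub_le _ _).trans (by linarith [hb j])
  nlinarith [norm_nonneg (u - b j)]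

/-- closed conditions satisfied by good parameters -/
def Kc (e : (Fin n → ℂ) × ℝ) : Prop :=
  (∀ z : ℂ, ‖z‖ ≤ 1 → |e.2| * (1 - ‖z‖) ^ n ≤ ‖(Gp e).eval z‖ ∧ ‖(Gp e).eval z‖ ≤ |e.2| * 2 ^ n) ∧
  ∀ u : ℂ, ‖u‖ = 1 → ‖(Gp e).eval u‖ ^ 2 ≤ Tq e u

lemma Good.kc {e : (Fin n → ℂ) × ℝ} (h : Good e) : Kc e :=
  ⟨fun _ hz => ⟨norm_Gp_lower h hz, norm_Gp_upper h hz⟩, fun _ hu => Tq_lower h hu⟩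

lemma Kc_closed : IsClosed {e : (Fin n → ℂ) × ℝ | Kc e} := by
  have hG : ∀ z, Continuous (fun e : (Fin n → ℂ) × ℝ => (Gp e).eval z) := fun z =>
    Gp_cont.comp (by fun_prop : Continuous fun e : (Fin n → ℂ) × ℝ => (e, z))
  have hT : ∀ z, Continuous (fun e : (Fin n → ℂ) × ℝ => Tq e z) := fun z =>
    Tq_cont.comp (by fun_prop : Continuous fun e : (Fin n → ℂ) × ℝ => (e, z))
  unfold Kc
  simp only [Set.ofPred_and, Set.ofPred_forall]
  refine IsClosed.inter ?_ ?_
  · refine isClosed_iInter fun z => isClosed_iInter fun hz => IsClosed.inter ?_ ?_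
    · exact isClosed_le (by fun_prop) (hG z).norm
    · exact isClosed_le (hG z).norm (by fun_prop)
  · refine isClosed_iInter fun z => isClosed_iInter fun hz => ?_
    exact isClosed_le ((hG z).norm.pow 2) (hT z)

lemma Tq_zero {e : (Fin n → ℂ) × ℝ} {u : ℂ} (h : (Gp e).eval u = 0) : Tq e u = 0 := by
  simp [Tq, h]

lemma Kc.good {e : (Fin n → ℂ) × ℝ} (h : Kc e) (hT : ∀ u : ℂ, ‖u‖ = 1 → 0 < Tq e u) : Good e := by
  have he : 0 < |e.2| := by
    rw [abs_pos]
    intro h0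
    have h1 := (h.1 1 (by simp)).2
    rw [h0, abs_zero, zero_mul] at h1
    have h2 := Tq_zero (norm_le_zero_iff.1 h1)
    have := hT 1 (by simp)
    linarith
  intro z hz h0
  rcases hz.lt_or_eq with hz1 | hz1
  · have h1 := (h.1 z hz).1
    rw [h0, norm_zero] at h1
    have : 0 < (1 - ‖z‖) ^ n := pow_pos (by linarith) n
    nlinarith [mul_pos he this]
  · have := hT z hz1
    rw [Tq_zero h0] at this
    exact lt_irrefl _ this

lemma bound_exists {ζ : Fin (2 * n + 1) → ℂ} (hi : Function.Injective ζ) :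
    ∃ M : ℝ, ∀ e : (Fin n → ℂ) × ℝ, (∀ k, ‖(Gp e).eval (ζ k)‖ ≤ 2 ^ n) → ‖e‖ ≤ M := by
  let Λ : ((Fin n → ℂ) × ℝ) →ₗ[ℝ] (Fin (2 * n + 1) → ℂ) := LinearMap.pi fun k => Lev n (ζ k)
  have hker : LinearMap.ker Λ = ⊥ := by
    rw [LinearMap.ker_eq_bot']
    intro e he
    apply Gp_inj
    refine Polynomial.eq_zero_of_degree_lt_of_eval_index_eq_zero (s := Finset.univ) (v := ζ) hi.injOn ?_ ?_
    · simp only [Finset.card_univ, Fintype.card_fin]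
      refine lt_of_le_of_lt (degree_le_of_natDegree_le (Gp_natDegree e)) ?_
      exact_mod_cast (by omega : n < 2 * n + 1)
    · intro k _
      exact congrFun he k
  obtain ⟨K, hK, hanti⟩ := LinearMap.exists_antilipschitzWith Λ hker
  refine ⟨K * 2 ^ n, fun e he => ?_⟩
  have h1 := hanti.le_mul_dist e 0
  rw [map_zero, dist_zero_right, dist_zero_right] at h1
  refine h1.trans ?_
  gcongr
  exact (pi_norm_le_iff_of_nonneg (by positivity)).2 he

lemma exists_param (c : Fin n → ℂ) (hc : ∀ j, ‖c j‖ < 1) :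
    ∃ e : (Fin n → ℂ) × ℝ, Good e ∧ Wp e = Rp c := by
  obtain ⟨ζ, hi, hζ⟩ := exists_zeta (2 * n + 1) (by omega)
  have hb : ∀ t : ℝ, t ∈ Set.Icc (0 : ℝ) 1 → ∀ j, ‖(fun j => (t : ℂ) * c j) j‖ < 1 := by
    intro t ht j
    simp only [norm_mul, Complex.norm_real, Real.norm_eq_abs, abs_of_nonneg ht.1]
    exact lt_of_le_of_lt (mul_le_of_le_one_left (norm_nonneg _) ht.2) (hc j)
  let tg : ℝ → Fin (2 * n + 1) → ℝ := fun t k => Tg (fun j => (t : ℂ) * c j) (ζ k)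
  have htg : Continuous tg := by
    simp only [tg, Tg]; fun_prop
  let S : Set ℝ := {t | ∃ e : (Fin n → ℂ) × ℝ, Good e ∧ Fm ζ e = tg t}
  have hclosed : IsClosed (S ∩ Set.Icc 0 1) := by
    obtain ⟨M, hM⟩ := bound_exists (n := n) hi
    let Z : Set (ℝ × ((Fin n → ℂ) × ℝ)) := {x | x.1 ∈ Set.Icc (0 : ℝ) 1 ∧ Kc x.2 ∧ Fm ζ x.2 = tg x.1}
    have hZc : IsClosed Z := by
      refine IsClosed.inter (isClosed_Icc.preimage continuous_fst)
        (IsClosed.inter (Kc_closed.preimage continuous_snd) ?_)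
      exact isClosed_eq ((Fm_contDiff ζ).continuous.comp continuous_snd) (htg.comp continuous_fst)
    have hZb : Z ⊆ Set.Icc (0 : ℝ) 1 ×ˢ closedBall (0 : (Fin n → ℂ) × ℝ) M := by
      rintro ⟨t, e⟩ ⟨h1, h2, h3⟩
      refine ⟨h1, ?_⟩
      rw [mem_closedBall_zero_iff]
      refine hM e fun k => ?_
      have h4 := h2.2 (ζ k) (hζ k)
      have h5 : Tq e (ζ k) = tg t k := congrFun h3 k
      rw [h5] at h4
      have h6 := h4.trans (Tg_le (hb t h1) (hζ k))
      have h7 : (4 : ℝ) ^ n = (2 ^ n) ^ 2 := by rw [← pow_mul, mul_comm, pow_mul]; norm_num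
      rw [h7] at h6
      exact (pow_le_pow_iff_left₀ (norm_nonneg _) (by positivity) two_ne_zero).1 h6
    have hZk : IsCompact Z :=
      (isCompact_Icc.prod (isCompact_closedBall _ _)).of_isClosed_subset hZc hZb
    have : S ∩ Set.Icc 0 1 = Prod.fst '' Z := by
      ext t
      constructor
      · rintro ⟨⟨e, he, hF⟩, ht⟩
        exact ⟨(t, e), ⟨ht, he.kc, hF⟩, rfl⟩
      · rintro ⟨⟨t, e⟩, ⟨h1, h2, h3⟩, rfl⟩
        refine ⟨⟨e, h2.good fun u hu => ?_, h3⟩, h1⟩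
        rw [Tq_eq (Wp_eq hi hζ (fun k => congrFun h3 k)) hu]
        exact Tg_pos (hb t h1) hu
    rw [this]
    exact (hZk.image continuous_fst).isClosed
  have h0 : (0 : ℝ) ∈ S := by
    refine ⟨(0, 1 / Real.sqrt (n + 1)), ?_, ?_⟩
    · intro z hz
      rw [Gp_eval]
      have : (0 : ℝ) < Real.sqrt (n + 1) := Real.sqrt_pos.2 (by positivity)
      simp
      exact this.ne'
    · funext k
      have hs : Real.sqrt ((n : ℝ) + 1) ^ 2 = n + 1 := Real.sq_sqrt (by positivity)
      have hs0 : (0 : ℝ) < Real.sqrt (n + 1) := Real.sqrt_pos.2 (by positivity)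
      simp only [Fm, Tq, re_conj_mul_self, Gp_eval, Gp_deriv_eval, tg, Tg]
      simp [hζ k, abs_of_pos hs0, hs]
      field_simp
  have hsub := hclosed.Icc_subset_of_forall_mem_nhdsWithin h0 (fun t ht => by
    obtain ⟨⟨e, he, hF⟩, -⟩ := ht
    have h1 := open_lemma hi hζ he
    rw [hF] at h1
    exact mem_nhdsWithin_of_mem_nhds (htg.continuousAt.eventually h1))
  obtain ⟨e, he, hF⟩ := hsub (Set.right_mem_Icc.2 zero_le_one)
  refine ⟨e, he, Wp_eq hi hζ fun k => ?_⟩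
  have := congrFun hF k
  simpa [tg, Fm] using this

end


lemma vOrder_eq {f : ℂ → ℂ} {w : ℂ} {m : ℕ} (hf : AnalyticAt ℂ f w) (h : analyticOrderAt f w = m) :
    vOrder f w = m := by
  have h1 := (natCast_le_analyticOrderAt_iff_iteratedDeriv_eq_zero (n := m) hf).1 h.ge
  have h2 : iteratedDeriv m f w ≠ 0 := by
    intro h0
    have h3 := (natCast_le_analyticOrderAt_iff_iteratedDeriv_eq_zero (n := m + 1) hf).2 (fun i hi => by
      rcases Nat.lt_succ_iff_lt_or_eq.1 hi with h4 | h4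
      · exact h1 i h4
      · rw [h4]; exact h0)
    rw [h] at h3
    have : m + 1 ≤ m := by exact_mod_cast h3
    omega
  unfold vOrder
  apply le_antisymm
  · exact sInf_le ⟨m, h2, rfl⟩
  · refine le_sInf ?_
    rintro _ ⟨k, hk, rfl⟩
    have : m ≤ k := by
      by_contra hc
      exact hk (h1 k (by omega))
    exact Nat.cast_le.2 this

lemma heins_aux (n : ℕ) (c : Fin n → ℂ) (hc : ∀ j, ‖c j‖ < 1) :
    ∃ (η : ℂ) (a : Fin (n + 1) → ℂ), ‖η‖ = 1 ∧ (∀ j, ‖a j‖ < 1) ∧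
      ∀ w ∈ Metric.ball (0 : ℂ) 1,
        vOrder
          (deriv (fun z : ℂ => η * ∏ j, (a j - z) / (1 - (starRingEnd ℂ) (a j) * z))) w
          = (Set.ncard {j : Fin n | c j = w} : ℕ∞) := by
  obtain ⟨e, he, hW⟩ := exists_param c hc
  obtain ⟨a, ha, hG, hA⟩ := good_factor he
  refine ⟨(-1) ^ (n + 1), Fin.cons 0 a, by simp, fun j => ?_, fun w hw => ?_⟩
  · refine Fin.cases ?_ (fun j => ?_) j
    · simp
    · simpa using ha j
  set B : ℂ → ℂ := fun z : ℂ => (-1) ^ (n + 1) * ∏ j, ((Fin.cons 0 a : Fin (n + 1) → ℂ) j - z) /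
    (1 - (starRingEnd ℂ) ((Fin.cons 0 a : Fin (n + 1) → ℂ) j) * z) with hB
  have hBeq : B = fun z => (Pp e).eval z / (Gp e).eval z := by
    funext z
    have hm : ∏ j, (a j - z) = (-1) ^ n * ∏ j, (z - a j) := by
      have : ((-1 : ℂ)) ^ n = ∏ _j : Fin n, (-1 : ℂ) := by simp
      rw [this, ← Finset.prod_mul_distrib]
      exact Finset.prod_congr rfl fun j _ => by ring
    rw [Pp_eval, hG, hA]
    simp only [hB, Fin.prod_univ_succ, Fin.cons_zero, Fin.cons_succ, Finset.prod_div_distrib, hm]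
    have hs : ((-1 : ℂ)) ^ n * (-1) ^ n = 1 := by rw [← mul_pow]; simp
    rw [mul_left_comm z, mul_div_mul_left _ _ he.ne]
    simp only [map_zero, zero_mul, sub_zero, div_one, zero_sub, pow_succ]
    linear_combination (z * (∏ j, (z - a j)) / ∏ j, (1 - (starRingEnd ℂ) (a j) * z)) * hs
  have hball : ball (0 : ℂ) 1 ∈ 𝓝 w := isOpen_ball.mem_nhds hw
  have hder : ∀ z ∈ ball (0 : ℂ) 1, deriv B z = (Rp c).eval z / (Gp e).eval z ^ 2 := by
    intro z hz
    have hz1 : ‖z‖ < 1 := by simpa using hz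
    have := ((Pp e).hasDerivAt z).div ((Gp e).hasDerivAt z) (he z hz1.le)
    rw [hBeq, ← hW]
    refine (this.deriv).trans ?_
    simp [Wp]
  have hGw : (Gp e).eval w ≠ 0 := he w (by simpa using (mem_ball_zero_iff.1 hw).le)
  have han : ∀ p : ℂ[X], AnalyticAt ℂ (fun z => p.eval z) w := fun p =>
    (Differentiable.analyticAt p.differentiable w)
  have hev : deriv B =ᶠ[𝓝 w] fun z => (Rp c).eval z / (Gp e).eval z ^ 2 := by
    filter_upwards [hball] with z hz using hder z hz
  have hanB : AnalyticAt ℂ (deriv B) w :=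
    ((han (Rp c)).div ((han (Gp e)).pow 2) (pow_ne_zero 2 hGw)).congr hev.symm
  have hcard : Set.ncard {j : Fin n | c j = w} = (Finset.univ.filter fun j => c j = w).card := by
    rw [← Set.ncard_coe_finset]; simp
  rw [hcard]
  refine vOrder_eq hanB (hanB.analyticOrderAt_eq_natCast.2 ?_)
  let Q : ℂ[X] := (∏ j ∈ Finset.univ.filter (fun j => ¬ c j = w), (X - C (c j))) *
    ∏ j, (1 - C ((starRingEnd ℂ) (c j)) * X)
  refine ⟨fun z => Q.eval z / (Gp e).eval z ^ 2,
    (han Q).div ((han (Gp e)).pow 2) (pow_ne_zero 2 hGw), ?_, ?_⟩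
  · refine div_ne_zero ?_ (pow_ne_zero 2 hGw)
    simp only [Q, eval_mul, eval_prod]
    refine mul_ne_zero (Finset.prod_ne_zero_iff.2 fun j hj => ?_) (Finset.prod_ne_zero_iff.2 fun j _ => ?_)
    · have hj' := (Finset.mem_filter.1 hj).2
      simp only [eval_sub, eval_X, eval_C]
      exact sub_ne_zero.2 (fun h => hj' h.symm)
    · simp only [eval_sub, eval_one, eval_mul, eval_C, eval_X]
      intro h0
      have h1 : (starRingEnd ℂ) (c j) * w = 1 := (sub_eq_zero.1 h0).symm
      have h2 := congrArg norm h1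
      rw [norm_mul, RCLike.norm_conj, norm_one] at h2
      have h3 : ‖w‖ < 1 := by simpa using hw
      nlinarith [hc j, norm_nonneg w, norm_nonneg (c j)]
  · filter_upwards [hev] with z hz
    rw [hz, smul_eq_mul, ← mul_div_assoc]
    congr 1
    simp only [Rp, Q, Finset.prod_mul_distrib, eval_mul]
    rw [← Finset.prod_filter_mul_prod_filter_not Finset.univ (fun j => c j = w) (fun j => X - C (c j)),
      eval_mul, mul_assoc]
    congr 1
    rw [eval_prod, Finset.prod_congr rfl (g := fun _ => z - w), Finset.prod_const]
    intro j hj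
    simp [(Finset.mem_filter.1 hj).2]


end Heins

/-- **Heins' theorem (existence).** Given points `c 0, …, c (n-1)` (not necessarily
distinct) in the open unit disk, there is a finite Blaschke product
`B(z) = η ∏_{j=1}^{n+1} (z_j − z)/(1 − conj z_j · z)` of degree `n + 1` whose
derivative vanishes in the disk exactly at the points `c j`, counted with
multiplicity, and nowhere else. -/
theorem heins_existence (n : ℕ) (c : Fin n → ℂ) (hc : ∀ j, ‖c j‖ < 1) :
    ∃ (η : ℂ) (a : Fin (n + 1) → ℂ), ‖η‖ = 1 ∧ (∀ j, ‖a j‖ < 1) ∧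
      ∀ w ∈ Metric.ball (0 : ℂ) 1,
        vOrder
          (deriv (fun z : ℂ => η * ∏ j, (a j - z) / (1 - (starRingEnd ℂ) (a j) * z))) w
          = (Set.ncard {j : Fin n | c j = w} : ℕ∞) := by
  exact heins_aux n c hc
end

section
/- (Nehari–Schwarz inequality) Let f be a nonconstant holomorphic function from the open unit disk 𝔻 into the closed unit disk, and let B be a finite Blaschke product such that every zero of B' in 𝔻 is a zero of f' of at least the same order. Then |f'(z)| (1 − |B(z)|²) ≤ |B'(z)| (1 − |f(z)|²) for all z ∈ 𝔻. -/
open Metric Filter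

/-- Disk automorphism sending `w` to `0`. -/
noncomputable def mob (w u : ℂ) : ℂ := (u - w) / (1 - (starRingEnd ℂ) w * u)

lemma mob_den_ne {w u : ℂ} (hw : ‖w‖ < 1) (hu : ‖u‖ ≤ 1) : 1 - (starRingEnd ℂ) w * u ≠ 0 := by
  intro h
  have h1 : (starRingEnd ℂ) w * u = 1 := (sub_eq_zero.1 h).symm
  have h2 : ‖w‖ * ‖u‖ = 1 := by
    rw [← RCLike.norm_conj w, ← norm_mul, h1, norm_one]
  nlinarith [norm_nonneg w, norm_nonneg u]

lemma one_sub_norm_mob {w u : ℂ} (hw : ‖w‖ < 1) (hu : ‖u‖ ≤ 1) :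
    1 - ‖mob w u‖ ^ 2 = (1 - ‖w‖ ^ 2) * (1 - ‖u‖ ^ 2) / ‖1 - (starRingEnd ℂ) w * u‖ ^ 2 := by
  have h := norm_pos_iff.2 (mob_den_ne hw hu)
  have h2 : ‖1 - (starRingEnd ℂ) w * u‖ ^ 2 ≠ 0 := by positivity
  rw [mob, norm_div, div_pow, eq_div_iff h2, sub_mul, div_mul_cancel₀ _ h2]
  simp only [Complex.sq_norm, Complex.normSq_apply, Complex.sub_re, Complex.sub_im, Complex.mul_re,
    Complex.mul_im, Complex.conj_re, Complex.conj_im, Complex.one_re, Complex.one_im]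
  ring

lemma norm_mob_lt {w u : ℂ} (hw : ‖w‖ < 1) (hu : ‖u‖ < 1) : ‖mob w u‖ < 1 := by
  have h := one_sub_norm_mob hw hu.le
  have h0 := norm_pos_iff.2 (mob_den_ne hw hu.le)
  have h1 : 0 < 1 - ‖w‖ ^ 2 := by nlinarith [norm_nonneg w]
  have h2 : 0 < 1 - ‖u‖ ^ 2 := by nlinarith [norm_nonneg u]
  have : 0 < 1 - ‖mob w u‖ ^ 2 := by rw [h]; positivity
  nlinarith [norm_nonneg (mob w u)]

lemma mob_self (w : ℂ) : mob w w = 0 := by simp [mob]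

lemma hasDerivAt_mob {w u : ℂ} (hw : ‖w‖ < 1) (hu : ‖u‖ ≤ 1) :
    HasDerivAt (mob w) ((1 - (starRingEnd ℂ) w * w) / (1 - (starRingEnd ℂ) w * u) ^ 2) u := by
  have hd := mob_den_ne hw hu
  have h1 : HasDerivAt (fun u : ℂ => u - w) 1 u := (hasDerivAt_id u).sub_const w
  have h2 : HasDerivAt (fun u : ℂ => 1 - (starRingEnd ℂ) w * u) (-((starRingEnd ℂ) w * 1)) u :=
    ((hasDerivAt_id u).const_mul _).const_sub 1
  refine (h1.div h2 hd).congr_deriv ?_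
  congr 1
  ring

lemma norm_one_sub_conj_mul_self (w : ℂ) (hw : ‖w‖ < 1) :
    ‖1 - (starRingEnd ℂ) w * w‖ = 1 - ‖w‖ ^ 2 := by
  rw [Complex.conj_mul']
  have : (1 : ℂ) - (‖w‖ : ℂ) ^ 2 = ((1 - ‖w‖ ^ 2 : ℝ) : ℂ) := by push_cast; ring
  rw [this, Complex.norm_real, Real.norm_of_nonneg]
  nlinarith [norm_nonneg w]

lemma analyticAt_mob {w u : ℂ} (hw : ‖w‖ < 1) (hu : ‖u‖ ≤ 1) : AnalyticAt ℂ (mob w) u := by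
  have hd := mob_den_ne hw hu
  unfold mob
  fun_prop (disch := assumption)

lemma schwarz_pick {f : ℂ → ℂ}
    (hf : ∀ z ∈ Metric.ball (0 : ℂ) 1, DifferentiableAt ℂ f z)
    (hlt : ∀ z ∈ Metric.ball (0 : ℂ) 1, ‖f z‖ < 1) {z : ℂ} (hz : ‖z‖ < 1) :
    ‖deriv f z‖ * (1 - ‖z‖ ^ 2) ≤ 1 - ‖f z‖ ^ 2 := by
  have hz' : ‖-z‖ < 1 := by simpa using hz
  have hfz := hlt z (by simpa using hz)
  set g : ℂ → ℂ := fun u => mob (f z) (f (mob (-z) u)) with hg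
  have h0 : mob (-z) 0 = z := by simp [mob]
  have hmem : ∀ u ∈ Metric.ball (0 : ℂ) 1, mob (-z) u ∈ Metric.ball (0 : ℂ) 1 := by
    intro u hu
    simpa using norm_mob_lt hz' (by simpa using hu)
  have hgd : ∀ u ∈ Metric.ball (0 : ℂ) 1, HasDerivAt g
      ((1 - (starRingEnd ℂ) (f z) * f z) / (1 - (starRingEnd ℂ) (f z) * f (mob (-z) u)) ^ 2 *
       (deriv f (mob (-z) u) *
        ((1 - (starRingEnd ℂ) (-z) * (-z)) / (1 - (starRingEnd ℂ) (-z) * u) ^ 2))) u := by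
    intro u hu
    have h1 := hasDerivAt_mob hz' (u := u) (by simpa using (mem_ball_zero_iff.1 hu).le)
    have h2 := (hf _ (hmem u hu)).hasDerivAt
    have h3 := hasDerivAt_mob hfz (hlt _ (hmem u hu)).le
    exact h3.comp u (h2.comp u h1)
  have key : ‖deriv g 0‖ ≤ 1 := by
    apply Complex.norm_deriv_le_one_of_mapsTo_ball (c := 0) (R := 1)
    · intro u hu
      exact (hgd u hu).differentiableAt.differentiableWithinAt
    · intro u hu
      have : g 0 = 0 := by simp only [hg, h0, mob_self]
      rw [this, mem_closedBall_zero_iff]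
      exact (norm_mob_lt hfz (hlt _ (hmem u hu))).le
    · norm_num
  rw [(hgd 0 (by simp)).deriv, h0] at key
  simp only [norm_mul, norm_div, norm_pow, norm_one_sub_conj_mul_self _ hfz,
    norm_one_sub_conj_mul_self _ hz', mul_zero, sub_zero, norm_one, norm_neg] at key
  have hp : 0 < 1 - ‖f z‖ ^ 2 := by nlinarith [norm_nonneg (f z)]
  have e : (1 - ‖f z‖ ^ 2) / (1 - ‖f z‖ ^ 2) ^ 2 * (‖deriv f z‖ * ((1 - ‖z‖ ^ 2) / 1 ^ 2)) =
    (‖deriv f z‖ * (1 - ‖z‖ ^ 2)) / (1 - ‖f z‖ ^ 2) := by field_simp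
  rw [e, div_le_one hp] at key
  exact key

lemma local_compare {F B h : ℂ → ℂ} {z₀ : ℂ} (hF : AnalyticAt ℂ F z₀) (hB : AnalyticAt ℂ B z₀)
    (hh : AnalyticAt ℂ h z₀) (hd : ∀ᶠ z in nhds z₀, deriv F z = h z * deriv B z)
    (hF0 : F z₀ = 0) (hB0 : B z₀ = 0) (hord : analyticOrderAt (deriv B) z₀ ≠ ⊤)
    (hM : 1 < ‖h z₀‖) : ∀ᶠ z in nhdsWithin z₀ {z₀}ᶜ, ‖B z‖ < ‖F z‖ := by
  set c := h z₀ with hc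
  set D : ℂ → ℂ := fun z => F z - c * B z with hD
  have hDa : AnalyticAt ℂ D z₀ := hF.sub (analyticAt_const.mul hB)
  have hD0 : D z₀ = 0 := by simp [hD, hF0, hB0]
  have hdD : deriv D =ᶠ[nhds z₀] (fun z => h z - c) * deriv B := by
    filter_upwards [hd, hF.eventually_analyticAt, hB.eventually_analyticAt] with z h1 h2 h3
    have := (h2.differentiableAt.hasDerivAt.sub (h3.differentiableAt.hasDerivAt.const_mul c)).deriv
    have e : deriv D z = deriv F z - c * deriv B z := this
    rw [e, h1, Pi.mul_apply]; ring
  have hhc : AnalyticAt ℂ (fun z => h z - c) z₀ := hh.sub analyticAt_const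
  have o1 : analyticOrderAt (deriv D) z₀ + 1 = analyticOrderAt D z₀ := by
    simpa [hD0] using hDa.analyticOrderAt_deriv_add_one
  have o2 : analyticOrderAt (deriv B) z₀ + 1 = analyticOrderAt B z₀ := by
    simpa [hB0] using hB.analyticOrderAt_deriv_add_one
  rw [analyticOrderAt_congr hdD, analyticOrderAt_mul hhc hB.deriv, add_assoc, o2] at o1
  have o3 : (1 : ℕ∞) ≤ analyticOrderAt (fun z => h z - c) z₀ := by
    rw [Order.one_le_iff_ne_zero]
    exact hhc.analyticOrderAt_ne_zero.2 (by simp [hc])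
  obtain ⟨m, hm⟩ := ENat.ne_top_iff_exists.1 hord
  have oB : analyticOrderAt B z₀ = ((m + 1 : ℕ) : ℕ∞) := by rw [← o2, ← hm]; rfl
  have oD : ((m + 1 + 1 : ℕ) : ℕ∞) ≤ analyticOrderAt D z₀ := by
    rw [← o1, oB, add_comm _ ((m + 1 : ℕ) : ℕ∞)]
    push_cast
    gcongr
  obtain ⟨b, hba, hb0, hb⟩ := hB.analyticOrderAt_eq_natCast.1 oB
  obtain ⟨r, hra, hr⟩ := (natCast_le_analyticOrderAt hDa).1 oD
  have hlt : ∀ᶠ z in nhds z₀, ‖z - z₀‖ * ‖r z‖ < (‖c‖ - 1) * ‖b z‖ := by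
    have c1 : ContinuousAt (fun z => ‖z - z₀‖ * ‖r z‖) z₀ :=
      (by fun_prop : ContinuousAt (fun z => ‖z - z₀‖) z₀).mul hra.continuousAt.norm
    have c2 : ContinuousAt (fun z => (‖c‖ - 1) * ‖b z‖) z₀ :=
      continuousAt_const.mul hba.continuousAt.norm
    refine c1.eventually_lt c2 ?_
    have := norm_pos_iff.2 hb0
    simp only [sub_self, norm_zero, zero_mul]
    exact mul_pos (by linarith) this
  filter_upwards [nhdsWithin_le_nhds hlt, nhdsWithin_le_nhds hb, nhdsWithin_le_nhds hr,
    self_mem_nhdsWithin] with z h1 h2 h3 h4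
  have hz : 0 < ‖z - z₀‖ := norm_pos_iff.2 (sub_ne_zero.2 h4)
  have hz' : 0 < ‖z - z₀‖ ^ (m + 1) := by positivity
  have e : ‖c * B z‖ ≤ ‖F z‖ + ‖D z‖ := by
    have : c * B z = F z - D z := by simp [hD]
    rw [this]; exact norm_sub_le _ _
  have eB : ‖B z‖ = ‖z - z₀‖ ^ (m + 1) * ‖b z‖ := by rw [h2]; simp
  have eD : ‖D z‖ = ‖z - z₀‖ ^ (m + 1) * (‖z - z₀‖ * ‖r z‖) := by rw [h3]; simp; ring
  have := mul_lt_mul_of_pos_left h1 hz'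
  rw [norm_mul] at e
  rw [eB] at e ⊢
  rw [eD] at e
  nlinarith

lemma no_local_max {F B h : ℂ → ℂ} {z₀ : ℂ} (hF : AnalyticAt ℂ F z₀) (hB : AnalyticAt ℂ B z₀)
    (hh : AnalyticAt ℂ h z₀) (hd : ∀ᶠ z in nhds z₀, deriv F z = h z * deriv B z)
    (hFl : ∀ᶠ z in nhds z₀, ‖F z‖ < 1) (hBl : ∀ᶠ z in nhds z₀, ‖B z‖ < 1)
    (hord : analyticOrderAt (deriv B) z₀ ≠ ⊤)
    (hmax : IsLocalMax (fun z => ‖h z‖ * (1 - ‖B z‖ ^ 2) / (1 - ‖F z‖ ^ 2)) z₀)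
    (hM : 1 < ‖h z₀‖ * (1 - ‖B z₀‖ ^ 2) / (1 - ‖F z₀‖ ^ 2)) : False := by
  have hF0 : ‖F z₀‖ < 1 := hFl.self_of_nhds
  have hB0 : ‖B z₀‖ < 1 := hBl.self_of_nhds
  set F' : ℂ → ℂ := fun z => mob (F z₀) (F z) with hF'
  set B' : ℂ → ℂ := fun z => mob (B z₀) (B z) with hB'
  set h' : ℂ → ℂ := fun z => h z *
    ((1 - (starRingEnd ℂ) (F z₀) * F z₀) / (1 - (starRingEnd ℂ) (F z₀) * F z) ^ 2) *
    ((1 - (starRingEnd ℂ) (B z₀) * B z) ^ 2 / (1 - (starRingEnd ℂ) (B z₀) * B z₀)) with hh'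
  have aF : AnalyticAt ℂ F' z₀ := (analyticAt_mob hF0 hF0.le).comp hF
  have aB : AnalyticAt ℂ B' z₀ := (analyticAt_mob hB0 hB0.le).comp hB
  have nB := mob_den_ne hB0 hB0.le
  have nF := mob_den_ne hF0 hF0.le
  have ah : AnalyticAt ℂ h' z₀ := by
    have : (1 - (starRingEnd ℂ) (F z₀) * F z₀) ^ 2 ≠ 0 := pow_ne_zero _ nF
    simp only [hh']
    fun_prop (disch := assumption)
  have dF : ∀ᶠ z in nhds z₀, deriv F' z =
      ((1 - (starRingEnd ℂ) (F z₀) * F z₀) / (1 - (starRingEnd ℂ) (F z₀) * F z) ^ 2) *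
        deriv F z := by
    filter_upwards [hFl, hF.eventually_analyticAt] with z h1 h2
    exact ((hasDerivAt_mob hF0 h1.le).comp z h2.differentiableAt.hasDerivAt).deriv
  have dB : ∀ᶠ z in nhds z₀, deriv B' z =
      ((1 - (starRingEnd ℂ) (B z₀) * B z₀) / (1 - (starRingEnd ℂ) (B z₀) * B z) ^ 2) *
        deriv B z := by
    filter_upwards [hBl, hB.eventually_analyticAt] with z h1 h2
    exact ((hasDerivAt_mob hB0 h1.le).comp z h2.differentiableAt.hasDerivAt).deriv
  have hd' : ∀ᶠ z in nhds z₀, deriv F' z = h' z * deriv B' z := by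
    filter_upwards [dF, dB, hd, hBl, hFl] with z h1 h2 h3 h4 h5
    have n1 := mob_den_ne hB0 h4.le
    have n2 := mob_den_ne hF0 h5.le
    rw [h1, h2, h3]
    simp only [hh']
    field_simp
  have hord' : analyticOrderAt (deriv B') z₀ ≠ ⊤ := by
    intro ht
    apply hord
    rw [analyticOrderAt_eq_top] at ht ⊢
    filter_upwards [ht, dB, hBl] with z h1 h2 h3
    have n1 := mob_den_ne hB0 h3.le
    rw [h1] at h2
    rcases mul_eq_zero.1 h2.symm with h4 | h4
    · exact absurd h4 (div_ne_zero nB (pow_ne_zero _ n1))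
    · exact h4
  have pF : 0 < 1 - ‖F z₀‖ ^ 2 := by nlinarith [norm_nonneg (F z₀)]
  have pB : 0 < 1 - ‖B z₀‖ ^ 2 := by nlinarith [norm_nonneg (B z₀)]
  have eg : ∀ᶠ z in nhds z₀, ‖h z‖ * (1 - ‖B z‖ ^ 2) / (1 - ‖F z‖ ^ 2) =
      ‖h' z‖ * (1 - ‖B' z‖ ^ 2) / (1 - ‖F' z‖ ^ 2) := by
    filter_upwards [hBl, hFl] with z h4 h5
    have n1 := norm_pos_iff.2 (mob_den_ne hB0 h4.le)
    have n2 := norm_pos_iff.2 (mob_den_ne hF0 h5.le)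
    have p1 : 0 < 1 - ‖F z‖ ^ 2 := by nlinarith [norm_nonneg (F z)]
    simp only [hh', hB', hF', one_sub_norm_mob hB0 h4.le, one_sub_norm_mob hF0 h5.le, norm_mul,
      norm_div, norm_pow, norm_one_sub_conj_mul_self _ hB0, norm_one_sub_conj_mul_self _ hF0]
    field_simp
  have eg0 : ‖h z₀‖ * (1 - ‖B z₀‖ ^ 2) / (1 - ‖F z₀‖ ^ 2) = ‖h' z₀‖ := by
    rw [eg.self_of_nhds]; simp [hB', hF', mob_self]
  rw [eg0] at hM
  have cmp := local_compare aF aB ah hd' (by simp [hF', mob_self]) (by simp [hB', mob_self])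
    hord' hM
  have hstrict : ∀ᶠ z in nhdsWithin z₀ {z₀}ᶜ, ‖h' z‖ < ‖h' z₀‖ := by
    filter_upwards [cmp, nhdsWithin_le_nhds eg, nhdsWithin_le_nhds hmax, nhdsWithin_le_nhds hBl,
      nhdsWithin_le_nhds hFl] with z h1 h2 h3 h4 h5
    have h3' : ‖h z‖ * (1 - ‖B z‖ ^ 2) / (1 - ‖F z‖ ^ 2) ≤ ‖h' z₀‖ := by rw [← eg0]; exact h3
    rw [h2] at h3'
    have lF : ‖F' z‖ < 1 := norm_mob_lt hF0 h5
    have q1 : 0 < 1 - ‖F' z‖ ^ 2 := by nlinarith [norm_nonneg (F' z)]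
    have q2 : 1 - ‖F' z‖ ^ 2 < 1 - ‖B' z‖ ^ 2 := by nlinarith [norm_nonneg (B' z)]
    rw [div_le_iff₀ q1] at h3'
    by_contra hcon
    push Not at hcon
    have : 0 < ‖h' z‖ := by linarith
    nlinarith
  have hlm : IsLocalMax (norm ∘ h') z₀ := by
    have h1 := eventually_nhdsWithin_iff.1 hstrict
    filter_upwards [h1] with z hz
    by_cases hzz : z = z₀
    · rw [hzz]
    · exact (hz hzz).le
  have heq := Complex.norm_eventually_eq_of_isLocalMax
    (ah.eventually_analyticAt.mono fun z hz => hz.differentiableAt) hlm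
  obtain ⟨z, hz1, hz2⟩ := (hstrict.and (nhdsWithin_le_nhds heq)).exists
  exact hz1.ne hz2

lemma vOrder_eq_s2 {F : ℂ → ℂ} {z : ℂ} (hF : AnalyticAt ℂ F z) :
    vOrder F z = analyticOrderAt F z := by
  refine ENat.eq_of_forall_natCast_le_iff fun m => ?_
  rw [natCast_le_analyticOrderAt_iff_iteratedDeriv_eq_zero hF, vOrder]
  simp only [le_sInf_iff, Set.mem_image, Set.mem_ofPred_eq, forall_exists_index, and_imp,
    forall_apply_eq_imp_iff₂, Nat.cast_le]
  constructor
  · intro h i hi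
    by_contra hne
    exact absurd (h i hne) (by omega)
  · intro h i hi
    by_contra hlt
    exact hi (h i (by omega))

lemma exists_quot {p q : ℂ → ℂ} (hp : AnalyticOnNhd ℂ p (Metric.ball 0 1))
    (hq : AnalyticOnNhd ℂ q (Metric.ball 0 1))
    (hqt : ∀ z ∈ Metric.ball (0 : ℂ) 1, analyticOrderAt q z ≠ ⊤)
    (hle : ∀ z ∈ Metric.ball (0 : ℂ) 1, analyticOrderAt q z ≤ analyticOrderAt p z) :
    ∃ h : ℂ → ℂ, AnalyticOnNhd ℂ h (Metric.ball 0 1) ∧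
      ∀ z ∈ Metric.ball (0 : ℂ) 1, p z = h z * q z := by
  have hm : MeromorphicOn (p / q) (Metric.ball 0 1) := fun z hz =>
    (hp z hz).meromorphicAt.div (hq z hz).meromorphicAt
  set h := toMeromorphicNFOn (p / q) (Metric.ball 0 1) with hh
  have ha : AnalyticOnNhd ℂ h (Metric.ball 0 1) := by
    intro z hz
    have hn : MeromorphicNFAt h z := meromorphicNFOn_toMeromorphicNFOn _ _ hz
    rw [← hn.meromorphicOrderAt_nonneg_iff_analyticAt, hh, meromorphicOrderAt_toMeromorphicNFOn hm hz,
      meromorphicOrderAt_div (hp z hz).meromorphicAt (hq z hz).meromorphicAt,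
      (hp z hz).meromorphicOrderAt_eq, (hq z hz).meromorphicOrderAt_eq]
    have h1 := hqt z hz
    have h2 := hle z hz
    revert h1 h2
    generalize analyticOrderAt q z = x
    generalize analyticOrderAt p z = y
    intro h1 h2
    obtain ⟨m, rfl⟩ := ENat.ne_top_iff_exists.1 h1
    induction y using ENat.recTopCoe with
    | top => simp
    | coe k =>
      simp only [Nat.cast_le] at h2
      simp only [ENat.map_natCast]
      norm_cast
      omega
  refine ⟨h, ha, fun z hz => ?_⟩
  have e1 : ∀ᶠ w in nhdsWithin z {z}ᶜ, p w = h w * q w := by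
    have e2 := toMeromorphicNFOn_eq_toMeromorphicNFAt_on_nhds hm hz
    have e3 := (hm z hz).eq_nhdsNE_toMeromorphicNFAt
    have e4 : ∀ᶠ w in nhdsWithin z {z}ᶜ, q w ≠ 0 := by
      rcases (hq z hz).eventually_eq_zero_or_eventually_ne_zero with h0 | h0
      · exact absurd (analyticOrderAt_eq_top.2 h0) (hqt z hz)
      · exact h0
    filter_upwards [nhdsWithin_le_nhds e2, e3, e4] with w h1 h2 h3
    rw [hh, h1, ← h2, Pi.div_apply, div_mul_cancel₀ _ h3]
  have c1 := (hp z hz).continuousAt.continuousWithinAt (s := {z}ᶜ)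
  have c2 := ((ha z hz).continuousAt.mul (hq z hz).continuousAt).continuousWithinAt (s := {z}ᶜ)
  exact tendsto_nhds_unique (c1.tendsto.congr' e1) c2.tendsto

lemma one_sub_prod_le {ι : Type*} (s : Finset ι) (x : ι → ℝ) (h0 : ∀ i, 0 ≤ x i)
    (h1 : ∀ i, x i ≤ 1) : 1 - ∏ i ∈ s, x i ≤ ∑ i ∈ s, (1 - x i) := by
  classical
  induction s using Finset.induction_on with
  | empty => simp
  | insert i s hi ih =>
    rw [Finset.prod_insert hi, Finset.sum_insert hi]
    have := Finset.prod_le_one (s := s) (fun i _ => h0 i) (fun i _ => h1 i)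
    nlinarith [h0 i, h1 i]

lemma norm_mob_le {w u : ℂ} (hw : ‖w‖ < 1) (hu : ‖u‖ ≤ 1) : ‖mob w u‖ ≤ 1 := by
  have h := one_sub_norm_mob hw hu
  have h0 := norm_pos_iff.2 (mob_den_ne hw hu)
  have h1 : 0 ≤ 1 - ‖w‖ ^ 2 := by nlinarith [norm_nonneg w]
  have h2 : 0 ≤ 1 - ‖u‖ ^ 2 := by nlinarith [norm_nonneg u]
  have : 0 ≤ 1 - ‖mob w u‖ ^ 2 := by rw [h]; positivity
  nlinarith [norm_nonneg (mob w u)]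

section Blaschke

variable {n : ℕ} {η : ℂ} {a : Fin n → ℂ} {B : ℂ → ℂ}

lemma blaschke_eq (hB : ∀ z, B z = η * ∏ j, (a j - z) / (1 - (starRingEnd ℂ) (a j) * z)) :
    B = fun z => (η * (-1) ^ n) * ∏ j, mob (a j) z := by
  funext z
  rw [hB, mul_assoc]
  congr 1
  have : ∀ j, (a j - z) / (1 - (starRingEnd ℂ) (a j) * z) = (-1) * mob (a j) z := by
    intro j; rw [mob]; ring
  simp_rw [this]
  rw [Finset.prod_mul_distrib]
  simp

lemma blaschke_analytic (ha : ∀ j, ‖a j‖ < 1)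
    (hB : ∀ z, B z = η * ∏ j, (a j - z) / (1 - (starRingEnd ℂ) (a j) * z)) {z : ℂ}
    (hz : ‖z‖ ≤ 1) : AnalyticAt ℂ B z := by
  rw [blaschke_eq hB]
  exact analyticAt_const.mul
    (Finset.analyticAt_fun_prod _ fun j _ => analyticAt_mob (ha j) hz)

lemma norm_blaschke (hη : ‖η‖ = 1)
    (hB : ∀ z, B z = η * ∏ j, (a j - z) / (1 - (starRingEnd ℂ) (a j) * z)) (z : ℂ) :
    ‖B z‖ = ∏ j, ‖mob (a j) z‖ := by
  rw [blaschke_eq hB]; simp [hη]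

lemma norm_blaschke_lt (hn : n ≠ 0) (hη : ‖η‖ = 1) (ha : ∀ j, ‖a j‖ < 1)
    (hB : ∀ z, B z = η * ∏ j, (a j - z) / (1 - (starRingEnd ℂ) (a j) * z)) {z : ℂ}
    (hz : ‖z‖ < 1) : ‖B z‖ < 1 := by
  rw [norm_blaschke hη hB]
  obtain ⟨m, rfl⟩ := Nat.exists_eq_succ_of_ne_zero hn
  rw [Fin.prod_univ_succ]
  have h1 := norm_mob_lt (ha 0) hz
  have h2 : ∏ i : Fin m, ‖mob (a i.succ) z‖ ≤ 1 :=
    Finset.prod_le_one (fun i _ => norm_nonneg _) (fun i _ => (norm_mob_lt (ha _) hz).le)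
  have h3 : 0 ≤ ∏ i : Fin m, ‖mob (a i.succ) z‖ := Finset.prod_nonneg fun i _ => norm_nonneg _
  nlinarith [norm_nonneg (mob (a 0) z)]

lemma blaschke_deriv_circle (hη : ‖η‖ = 1) (ha : ∀ j, ‖a j‖ < 1)
    (hB : ∀ z, B z = η * ∏ j, (a j - z) / (1 - (starRingEnd ℂ) (a j) * z)) {z : ℂ}
    (hz : ‖z‖ = 1) :
    ‖deriv B z‖ = ∑ j, (1 - ‖a j‖ ^ 2) / ‖1 - (starRingEnd ℂ) (a j) * z‖ ^ 2 := by
  have hz0 : z ≠ 0 := by intro h; simp [h] at hz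
  have hzz : z * (starRingEnd ℂ) z = 1 := by rw [Complex.mul_conj']; simp [hz]
  have hd := (HasDerivAt.fun_finsetProd (u := Finset.univ) (f := fun j => mob (a j))
    (fun j _ => hasDerivAt_mob (ha j) hz.le)).const_mul (η * (-1) ^ n)
  have nB : ‖B z‖ = 1 := by
    rw [norm_blaschke hη hB]
    apply Finset.prod_eq_one
    intro j _
    have := one_sub_norm_mob (ha j) hz.le
    rw [hz] at this
    simp only [one_pow, sub_self, mul_zero, zero_div] at this
    nlinarith [norm_nonneg (mob (a j) z)]
  have key : ∀ j, (1 - (starRingEnd ℂ) (a j) * a j) / (1 - (starRingEnd ℂ) (a j) * z) ^ 2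
      = mob (a j) z * (((1 - ‖a j‖ ^ 2) / ‖1 - (starRingEnd ℂ) (a j) * z‖ ^ 2 : ℝ) : ℂ) / z := by
    intro j
    have h1 := mob_den_ne (ha j) hz.le
    have h1' : 1 - (starRingEnd ℂ) z * a j ≠ 0 := by
      intro h
      apply h1
      have := congrArg (starRingEnd ℂ) h
      simpa [mul_comm] using this
    push_cast
    rw [← Complex.mul_conj' (1 - _), ← Complex.conj_mul' (a j), mob]
    simp only [map_sub, map_one, map_mul, Complex.conj_conj]
    have e : z - a j = z * (1 - (starRingEnd ℂ) z * a j) := by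
      rw [mul_sub, ← mul_assoc, hzz]; ring
    rw [e, mul_comm (a j) ((starRingEnd ℂ) z)]
    generalize 1 - (starRingEnd ℂ) z * a j = x at h1'
    field_simp
  have e : deriv B z = B z / z *
      ((∑ j, (1 - ‖a j‖ ^ 2) / ‖1 - (starRingEnd ℂ) (a j) * z‖ ^ 2 : ℝ) : ℂ) := by
    have h1 := hd.deriv
    rw [← blaschke_eq hB] at h1
    rw [h1]
    have h2 : B z = (η * (-1) ^ n) * ∏ j, mob (a j) z := by rw [blaschke_eq hB]
    rw [h2, Complex.ofReal_sum, Finset.mul_sum, Finset.mul_sum]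
    refine Finset.sum_congr rfl fun j hj => ?_
    rw [smul_eq_mul, key j, ← Finset.mul_prod_erase _ _ hj]
    ring
  have hpos : 0 ≤ ∑ j, (1 - ‖a j‖ ^ 2) / ‖1 - (starRingEnd ℂ) (a j) * z‖ ^ 2 := by
    refine Finset.sum_nonneg fun j _ => ?_
    have : 0 ≤ 1 - ‖a j‖ ^ 2 := by nlinarith [norm_nonneg (a j), ha j]
    positivity
  rw [e, norm_mul, norm_div, nB, hz, Complex.norm_real, Real.norm_of_nonneg hpos]
  simp

lemma blaschke_boundary (hn : n ≠ 0) (hη : ‖η‖ = 1) (ha : ∀ j, ‖a j‖ < 1)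
    (hB : ∀ z, B z = η * ∏ j, (a j - z) / (1 - (starRingEnd ℂ) (a j) * z)) {c : ℝ} (hc : 1 < c) :
    ∃ r < 1, 0 < r ∧ ∀ z : ℂ, r ≤ ‖z‖ → ‖z‖ < 1 → deriv B z ≠ 0 ∧
      1 - ‖B z‖ ^ 2 ≤ c * ‖deriv B z‖ * (1 - ‖z‖ ^ 2) := by
  set P : ℂ → ℝ := fun z => ∑ j, (1 - ‖a j‖ ^ 2) / ‖1 - (starRingEnd ℂ) (a j) * z‖ ^ 2 with hP
  have hpa : ∀ j, 0 < 1 - ‖a j‖ ^ 2 := fun j => by nlinarith [norm_nonneg (a j), ha j]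
  have hPpos : ∀ z : ℂ, ‖z‖ ≤ 1 → 0 < P z := by
    intro z hz
    have : Nonempty (Fin n) := ⟨⟨0, Nat.pos_of_ne_zero hn⟩⟩
    refine Finset.sum_pos (fun j _ => ?_) Finset.univ_nonempty
    have := norm_pos_iff.2 (mob_den_ne (ha j) hz)
    have := hpa j
    positivity
  have hPc : ContinuousOn P (Metric.closedBall 0 1) := by
    refine continuousOn_finsetSum _ fun j _ => ?_
    refine ContinuousOn.div continuousOn_const (by fun_prop) fun z hz => ?_
    have := norm_pos_iff.2 (mob_den_ne (ha j) (mem_closedBall_zero_iff.1 hz))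
    positivity
  have hBc : ContinuousOn (fun z => c * ‖deriv B z‖) (Metric.closedBall 0 1) := by
    refine continuousOn_const.mul (ContinuousOn.norm fun z hz => ?_)
    exact (blaschke_analytic ha hB (mem_closedBall_zero_iff.1 hz)).deriv.continuousAt.continuousWithinAt
  set K : Set ℂ := Metric.closedBall 0 1 ∩ {z | c * ‖deriv B z‖ ≤ P z} with hK
  have hKc : IsCompact K := by
    refine (isCompact_closedBall (0 : ℂ) 1).of_isClosed_subset ?_ Set.inter_subset_left
    exact Metric.isClosed_closedBall.isClosed_le hBc hPc
  have hK1 : ∀ z ∈ K, ‖z‖ < 1 := by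
    intro z hz
    have h1 : ‖z‖ ≤ 1 := mem_closedBall_zero_iff.1 hz.1
    refine lt_of_le_of_ne h1 fun h2 => ?_
    have h3 : c * ‖deriv B z‖ ≤ P z := hz.2
    rw [blaschke_deriv_circle hη ha hB h2] at h3
    have := hPpos z h1
    nlinarith
  have hr : ∃ r < 1, 0 < r ∧ ∀ z ∈ K, ‖z‖ < r := by
    rcases K.eq_empty_or_nonempty with h0 | h0
    · exact ⟨1 / 2, by norm_num, by norm_num, by simp [h0]⟩
    · obtain ⟨w, hw, hmax⟩ := hKc.exists_isMaxOn h0 continuous_norm.continuousOn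
      have := hK1 w hw
      refine ⟨(1 + ‖w‖) / 2, by linarith, by positivity, fun z hz => ?_⟩
      have h2 : ‖z‖ ≤ ‖w‖ := hmax hz
      linarith
  obtain ⟨r, hr1, hr0, hrK⟩ := hr
  refine ⟨r, hr1, hr0, fun z hz1 hz2 => ?_⟩
  have hlt : P z < c * ‖deriv B z‖ := by
    by_contra hcon
    push Not at hcon
    exact absurd (hrK z ⟨mem_closedBall_zero_iff.2 hz2.le, hcon⟩) (not_lt.2 hz1)
  have hp := hPpos z hz2.le
  refine ⟨fun h => ?_, ?_⟩
  · rw [h] at hlt; simp at hlt; linarith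
  have h1 : 1 - ‖B z‖ ^ 2 ≤ P z * (1 - ‖z‖ ^ 2) := by
    rw [norm_blaschke hη hB, ← Finset.prod_pow]
    refine (one_sub_prod_le _ _ (fun j => by positivity) (fun j => ?_)).trans_eq ?_
    · exact pow_le_one₀ (norm_nonneg _) (norm_mob_le (ha j) hz2.le)
    · rw [hP, Finset.sum_mul]
      refine Finset.sum_congr rfl fun j _ => ?_
      rw [one_sub_norm_mob (ha j) hz2.le]; ring
  have h2 : 0 ≤ 1 - ‖z‖ ^ 2 := by nlinarith [norm_nonneg z]
  exact h1.trans (mul_le_mul_of_nonneg_right hlt.le h2)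

end Blaschke

/-- **The Nehari–Schwarz inequality.** Let `f` be a nonconstant holomorphic function
from the open unit disk into the closed unit disk, and let
`B(z) = η ∏_j (a j − z)/(1 − conj (a j) · z)` be a finite Blaschke product such that
every zero of `B'` in the disk is a zero of `f'` of at least the same order. Then
`|f'(z)| (1 − |B(z)|²) ≤ |B'(z)| (1 − |f(z)|²)` for all `z` in the disk. -/
theorem nehari_schwarz_inequality (f : ℂ → ℂ)
    (hf_diff : ∀ z ∈ Metric.ball (0 : ℂ) 1, DifferentiableAt ℂ f z)
    (hf_le : ∀ z ∈ Metric.ball (0 : ℂ) 1, ‖f z‖ ≤ 1)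
    (hf_nc : ∃ z ∈ Metric.ball (0 : ℂ) 1, ∃ w ∈ Metric.ball (0 : ℂ) 1, f z ≠ f w)
    (n : ℕ) (η : ℂ) (a : Fin n → ℂ) (hη : ‖η‖ = 1) (ha : ∀ j, ‖a j‖ < 1)
    (B : ℂ → ℂ)
    (hB : ∀ z, B z = η * ∏ j, (a j - z) / (1 - (starRingEnd ℂ) (a j) * z))
    (hcrit : ∀ z ∈ Metric.ball (0 : ℂ) 1, vOrder (deriv B) z ≤ vOrder (deriv f) z) :
    ∀ z ∈ Metric.ball (0 : ℂ) 1,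
      ‖deriv f z‖ * (1 - ‖B z‖ ^ 2) ≤ ‖deriv B z‖ * (1 - ‖f z‖ ^ 2) := by
  have hfa : AnalyticOnNhd ℂ f (Metric.ball 0 1) :=
    DifferentiableOn.analyticOnNhd (fun z hz => (hf_diff z hz).differentiableWithinAt)
      Metric.isOpen_ball
  have hflt : ∀ z ∈ Metric.ball (0 : ℂ) 1, ‖f z‖ < 1 := by
    intro z hz
    refine lt_of_le_of_ne (hf_le z hz) fun h1 => ?_
    have hE := Complex.eqOn_of_isPreconnected_of_isMaxOn_norm
      (convex_ball (0 : ℂ) 1).isPreconnected Metric.isOpen_ball hfa.differentiableOn hz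
      (fun w hw => by
        change ‖f w‖ ≤ ‖f z‖
        rw [h1]; exact hf_le w hw)
    obtain ⟨u, hu, v, hv, huv⟩ := hf_nc
    exact huv ((hE hu).trans (hE hv).symm)
  have hfp : ∀ z ∈ Metric.ball (0 : ℂ) 1, 0 < 1 - ‖f z‖ ^ 2 := fun z hz => by
    nlinarith [norm_nonneg (f z), hflt z hz]
  rcases Nat.eq_zero_or_pos n with hn | hn
  · intro z hz
    have h1 : ‖B z‖ = 1 := by
      subst hn
      rw [hB]; simp [hη]
    rw [h1]
    have := mul_nonneg (norm_nonneg (deriv B z)) (hfp z hz).le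
    simpa using this
  have hn : n ≠ 0 := hn.ne'
  have hBa : AnalyticOnNhd ℂ B (Metric.ball 0 1) := fun z hz =>
    blaschke_analytic ha hB (mem_ball_zero_iff.1 hz).le
  have hBlt : ∀ z ∈ Metric.ball (0 : ℂ) 1, ‖B z‖ < 1 := fun z hz =>
    norm_blaschke_lt hn hη ha hB (mem_ball_zero_iff.1 hz)
  have hBt : ∀ z ∈ Metric.ball (0 : ℂ) 1, analyticOrderAt (deriv B) z ≠ ⊤ := by
    obtain ⟨r, hr1, hr0, hr⟩ := blaschke_boundary hn hη ha hB (c := 2) (by norm_num)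
    have hnr : ‖(r : ℂ)‖ = r := by rw [Complex.norm_real, Real.norm_of_nonneg hr0.le]
    have h1 := (hr (r : ℂ) hnr.ge (hnr.trans_lt hr1)).1
    have hrm : (r : ℂ) ∈ Metric.ball (0 : ℂ) 1 := by rw [mem_ball_zero_iff, hnr]; exact hr1
    intro z hz
    refine AnalyticOnNhd.analyticOrderAt_ne_top_of_isPreconnected hBa.deriv
      (convex_ball (0 : ℂ) 1).isPreconnected hrm hz ?_
    rw [(hBa.deriv _ hrm).analyticOrderAt_eq_zero.2 h1]
    simp
  obtain ⟨h, hha, hh⟩ := exists_quot hfa.deriv hBa.deriv hBt (fun z hz => by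
    rw [← vOrder_eq_s2 (hfa.deriv z hz), ← vOrder_eq_s2 (hBa.deriv z hz)]
    exact hcrit z hz)
  set g : ℂ → ℝ := fun z => ‖h z‖ * (1 - ‖B z‖ ^ 2) / (1 - ‖f z‖ ^ 2) with hg
  have hgc : ContinuousOn g (Metric.ball 0 1) := by
    have c1 := hha.continuousOn
    have c2 := hBa.continuousOn
    have c3 := hfa.continuousOn
    exact (c1.norm.mul (continuousOn_const.sub (c2.norm.pow 2))).div
      (continuousOn_const.sub (c3.norm.pow 2)) fun z hz => (hfp z hz).ne'
  have hg1 : ∀ z ∈ Metric.ball (0 : ℂ) 1, g z ≤ 1 := by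
    intro z₁ hz₁
    by_contra hcon
    push Not at hcon
    obtain ⟨c, hc1, hc2⟩ := exists_between hcon
    obtain ⟨r, hr1, hr0, hr⟩ := blaschke_boundary hn hη ha hB hc1
    have hbd : ∀ z : ℂ, r ≤ ‖z‖ → ‖z‖ < 1 → g z ≤ c := by
      intro z hz1 hz2
      have hz : z ∈ Metric.ball (0 : ℂ) 1 := mem_ball_zero_iff.2 hz2
      obtain ⟨h1, h2⟩ := hr z hz1 hz2
      have h3 := schwarz_pick hf_diff hflt hz2
      have h4 : 0 < ‖deriv B z‖ := norm_pos_iff.2 h1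
      have h5 : ‖deriv f z‖ = ‖h z‖ * ‖deriv B z‖ := by rw [hh z hz, norm_mul]
      simp only [hg]
      rw [div_le_iff₀ (hfp z hz)]
      have h6 := mul_le_mul_of_nonneg_left h2 (norm_nonneg (h z))
      have h7 := mul_le_mul_of_nonneg_left h3 (by linarith : (0 : ℝ) ≤ c)
      rw [h5] at h7
      calc _ ≤ _ := h6
        _ = c * (‖h z‖ * ‖deriv B z‖ * (1 - ‖z‖ ^ 2)) := by ring
        _ ≤ _ := h7
    have hz₁r : ‖z₁‖ < r := by
      by_contra hge
      push Not at hge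
      linarith [hbd z₁ hge (mem_ball_zero_iff.1 hz₁)]
    have hsub : Metric.closedBall (0 : ℂ) r ⊆ Metric.ball 0 1 := Metric.closedBall_subset_ball hr1
    obtain ⟨z₀, hz₀, hmax⟩ := (isCompact_closedBall (0 : ℂ) r).exists_isMaxOn
      ⟨z₁, mem_closedBall_zero_iff.2 hz₁r.le⟩ (hgc.mono hsub)
    have hge : g z₁ ≤ g z₀ := hmax (mem_closedBall_zero_iff.2 hz₁r.le)
    have hz₀b := hsub hz₀
    have hnb := Metric.isOpen_ball.mem_nhds hz₀b
    have hlm : IsLocalMax g z₀ := by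
      filter_upwards [hnb] with z hz
      rcases le_total ‖z‖ r with h1 | h1
      · exact hmax (mem_closedBall_zero_iff.2 h1)
      · linarith [hbd z h1 (mem_ball_zero_iff.1 hz)]
    refine no_local_max (hfa z₀ hz₀b) (hBa z₀ hz₀b) (hha z₀ hz₀b) ?_ ?_ ?_ (hBt z₀ hz₀b) hlm
      (lt_of_lt_of_le hcon hge)
    · filter_upwards [hnb] with z hz using hh z hz
    · filter_upwards [hnb] with z hz using hflt z hz
    · filter_upwards [hnb] with z hz using hBlt z hz
  intro z hz
  have h1 := hg1 z hz
  simp only [hg] at h1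
  rw [div_le_one (hfp z hz)] at h1
  rw [hh z hz, norm_mul]
  have := mul_le_mul_of_nonneg_left h1 (norm_nonneg (deriv B z))
  calc _ = _ := by ring
    _ ≤ _ := this
end
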